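/- arXiv:1210.4340 — 2 statements merged into one kernel-verified Lean document; each statement's English description precedes it below -/
import Mathlib

section
/- Let n ≥ 1, β > n, and κ = 1/(n − β). Let ψ : ℝⁿ → ℝ be a smooth function bounded from below such that ψ and |∇ψ|² are integrable with respect to the measure (1 + |x|²/(2β))^{−β−1} dx and ψ² is integrable with respect to (1 + |x|²/(2β))^{−β−2} dx. Then ∫ |∇ψ(x)|² (1 + |x|²/(2β))^{−β−1} dx ≥ ((κ − 1)/∫G_α) · [ ∫ ψ(x) (1 + |x|²/(2β))^{−β−1} dx ]² + ((β+1)/β) · ∫ ψ(x)² (1 + |x|²/(2β))^{−β−2} dx, where ∫G_α = ∫_{ℝⁿ} (1 + |x|²/(2β))^{−β} dx. -/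
open MeasureTheory

section helpers
open Set Filter Topology ProbabilityTheory

lemma oneD_core (A B H H' : ℝ → ℝ) (s : Set ℝ) (hA : ContinuousOn A s)
    (hB : ContinuousOn B s) (hH' : ContinuousOn H' s)
    (hB0 : ∀ x ∈ s, 0 ≤ B x) (hH : ∀ x ∈ s, HasDerivAt H (H' x) x)
    (hA0 : ∀ x ∈ s, 0 ≤ A x)
    (hle : ∀ x ∈ s, A x + H' x ≤ B x) (x y : ℝ) (hxy : x ≤ y) (hss : Icc x y ⊆ s) :
    ∫⁻ t in Ioc x y, ENNReal.ofReal (A t) ≤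
      (∫⁻ t in s, ENNReal.ofReal (B t)) + ENNReal.ofReal (H x - H y) := by
  have cA : IntervalIntegrable A volume x y :=
    (hA.mono (by rwa [uIcc_of_le hxy])).intervalIntegrable
  have cB : IntervalIntegrable B volume x y :=
    (hB.mono (by rwa [uIcc_of_le hxy])).intervalIntegrable
  have cH : IntervalIntegrable H' volume x y :=
    (hH'.mono (by rwa [uIcc_of_le hxy])).intervalIntegrable
  have ftc : ∫ t in x..y, H' t = H y - H x :=
    intervalIntegral.integral_eq_sub_of_hasDerivAt
      (fun t ht => hH t (hss (by rwa [uIcc_of_le hxy] at ht))) cH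
  have key : ∫ t in x..y, A t ≤ (∫ t in x..y, B t) + (H x - H y) := by
    have : ∫ t in x..y, A t ≤ ∫ t in x..y, (B t - H' t) :=
      intervalIntegral.integral_mono_on hxy cA (cB.sub cH)
        (fun t ht => by linarith [hle t (hss ht)])
    rw [intervalIntegral.integral_sub cB cH, ftc] at this
    linarith
  have e1 : ∫⁻ t in Ioc x y, ENNReal.ofReal (A t) = ENNReal.ofReal (∫ t in x..y, A t) := by
    rw [intervalIntegral.integral_of_le hxy, ofReal_integral_eq_lintegral_ofReal cA.1]
    filter_upwards [ae_restrict_mem measurableSet_Ioc] with t ht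
    exact hA0 t (hss (Ioc_subset_Icc_self ht))
  have e2 : ∫⁻ t in Ioc x y, ENNReal.ofReal (B t) = ENNReal.ofReal (∫ t in x..y, B t) := by
    rw [intervalIntegral.integral_of_le hxy, ofReal_integral_eq_lintegral_ofReal cB.1]
    filter_upwards [ae_restrict_mem measurableSet_Ioc] with t ht
    exact hB0 t (hss (Ioc_subset_Icc_self ht))
  rw [e1]
  calc _ ≤ ENNReal.ofReal ((∫ t in x..y, B t) + (H x - H y)) := ENNReal.ofReal_le_ofReal key
    _ ≤ ENNReal.ofReal (∫ t in x..y, B t) + ENNReal.ofReal (H x - H y) := ENNReal.ofReal_add_le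
    _ ≤ _ := by
      rw [← e2]
      gcongr
      exact Ioc_subset_Icc_self.trans hss

lemma oneD_seq (A B H H' : ℝ → ℝ) (s : Set ℝ) (hs : MeasurableSet s) (hA : ContinuousOn A s)
    (hB : ContinuousOn B s) (hH' : ContinuousOn H' s)
    (hB0 : ∀ x ∈ s, 0 ≤ B x) (hH : ∀ x ∈ s, HasDerivAt H (H' x) x)
    (hA0 : ∀ x ∈ s, 0 ≤ A x)
    (hle : ∀ x ∈ s, A x + H' x ≤ B x) (x y : ℕ → ℝ) (hxy : ∀ k, x k ≤ y k)
    (hss : ∀ k, Icc (x k) (y k) ⊆ s)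
    (hcov : AECover (volume.restrict s) atTop (fun k => Ioc (x k) (y k)))
    (ε : ℕ → ℝ) (hε : ∀ k, H (x k) - H (y k) ≤ ε k) (hε0 : Tendsto ε atTop (𝓝 0)) :
    ∫⁻ t in s, ENNReal.ofReal (A t) ≤ ∫⁻ t in s, ENNReal.ofReal (B t) := by
  have h1 := hcov.lintegral_tendsto_of_countably_generated
    (f := fun t => ENNReal.ofReal (A t)) (hA.aemeasurable hs).ennreal_ofReal
  have h2 : Tendsto (fun k => (∫⁻ t in s, ENNReal.ofReal (B t)) + ENNReal.ofReal (ε k)) atTop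
      (𝓝 ((∫⁻ t in s, ENNReal.ofReal (B t)) + 0)) := by
    refine Tendsto.add tendsto_const_nhds ?_
    simpa using ENNReal.tendsto_ofReal hε0
  rw [add_zero] at h2
  refine le_of_tendsto_of_tendsto' h1 h2 fun k => ?_
  rw [Measure.restrict_restrict measurableSet_Ioc,
    inter_eq_left.2 (Ioc_subset_Icc_self.trans (hss k))]
  refine (oneD_core A B H H' s hA hB hH' hB0 hH hA0 hle _ _ (hxy k) (hss k)).trans ?_
  gcongr
  exact hε k

lemma oneD_Ioi (a : ℝ) (A B H H' : ℝ → ℝ) (hA : ContinuousOn A (Ioi a))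
    (hB : ContinuousOn B (Ioi a)) (hH' : ContinuousOn H' (Ioi a))
    (hB0 : ∀ x ∈ Ioi a, 0 ≤ B x) (hH : ∀ x ∈ Ioi a, HasDerivAt H (H' x) x)
    (hA0 : ∀ x ∈ Ioi a, 0 ≤ A x)
    (hle : ∀ x ∈ Ioi a, A x + H' x ≤ B x) (hH0 : ∀ x ∈ Ioi a, 0 ≤ H x)
    (hlim : Tendsto H (𝓝[>] a) (𝓝 0)) :
    ∫⁻ t in Ioi a, ENNReal.ofReal (A t) ≤ ∫⁻ t in Ioi a, ENNReal.ofReal (B t) := by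
  have t0 : Tendsto (fun k : ℕ => a + 1 / ((k : ℝ) + 1)) atTop (𝓝 a) := by
    simpa using tendsto_const_nhds (x := a) |>.add tendsto_one_div_add_atTop_nhds_zero_nat
  have p0 : ∀ k : ℕ, 0 < 1 / ((k : ℝ) + 1) := fun k => by positivity
  have p1 : ∀ k : ℕ, 1 / ((k : ℝ) + 1) ≤ 1 := fun k => by
    rw [div_le_one (by positivity)]; linarith [Nat.cast_nonneg (α := ℝ) k]
  refine oneD_seq A B H H' _ measurableSet_Ioi hA hB hH' hB0 hH hA0 hle
    (fun k => a + 1 / ((k : ℝ) + 1)) (fun k => a + 1 + k) (fun k => ?_) (fun k t ht => ?_) ?_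
    (fun k => H (a + 1 / ((k : ℝ) + 1))) (fun k => ?_) ?_
  · linarith [p1 k, Nat.cast_nonneg (α := ℝ) k]
  · have := p0 k; have := ht.1; simp only [mem_Ioi]; linarith
  · exact (aecover_Ioi_of_Ioi t0).inter ((aecover_Iic
      (tendsto_atTop_add_const_left _ (a + 1) tendsto_natCast_atTop_atTop)).restrict)
  · have : 0 ≤ H (a + 1 + k) := hH0 _ (by simp only [mem_Ioi]; linarith [Nat.cast_nonneg (α := ℝ) k])
    linarith
  · refine hlim.comp (tendsto_nhdsWithin_iff.2 ⟨t0, .of_forall fun k => ?_⟩)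
    have := p0 k; simp only [mem_Ioi]; linarith

lemma oneD_Ioo (a b : ℝ) (hab : a < b) (A B H H' : ℝ → ℝ) (hA : ContinuousOn A (Ioo a b))
    (hB : ContinuousOn B (Ioo a b)) (hH' : ContinuousOn H' (Ioo a b))
    (hB0 : ∀ x ∈ Ioo a b, 0 ≤ B x) (hH : ∀ x ∈ Ioo a b, HasDerivAt H (H' x) x)
    (hA0 : ∀ x ∈ Ioo a b, 0 ≤ A x)
    (hle : ∀ x ∈ Ioo a b, A x + H' x ≤ B x)
    (hlim : Tendsto H (𝓝[>] a) (𝓝 0)) (hlim' : Tendsto H (𝓝[<] b) (𝓝 0)) :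
    ∫⁻ t in Ioo a b, ENNReal.ofReal (A t) ≤ ∫⁻ t in Ioo a b, ENNReal.ofReal (B t) := by
  set d : ℕ → ℝ := fun k => (b - a) / 2 * (1 / ((k : ℝ) + 1)) with hd
  have d0 : Tendsto d atTop (𝓝 0) := by
    have := tendsto_const_nhds (x := (b-a)/2) (f := (atTop : Filter ℕ)) |>.mul
      (tendsto_one_div_add_atTop_nhds_zero_nat (𝕜 := ℝ))
    rw [mul_zero] at this
    exact this
  have p0 : ∀ k : ℕ, 0 < d k := fun k => by
    have : 0 < b - a := by linarith
    positivity
  have p1 : ∀ k : ℕ, d k ≤ (b - a) / 2 := fun k => by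
    have : 1 / ((k : ℝ) + 1) ≤ 1 := by
      rw [div_le_one (by positivity)]; linarith [Nat.cast_nonneg (α := ℝ) k]
    have h2 : 0 ≤ (b - a) / 2 := by linarith
    calc d k ≤ (b - a) / 2 * 1 := mul_le_mul_of_nonneg_left this h2
      _ = _ := mul_one _
  have t0 : Tendsto (fun k => a + d k) atTop (𝓝 a) := by
    simpa using tendsto_const_nhds (x := a) |>.add d0
  have t1 : Tendsto (fun k => b - d k) atTop (𝓝 b) := by
    simpa using tendsto_const_nhds (x := b) |>.sub d0
  refine oneD_seq A B H H' _ measurableSet_Ioo hA hB hH' hB0 hH hA0 hle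
    (fun k => a + d k) (fun k => b - d k) (fun k => ?_) (fun k t ht => ?_) ?_
    (fun k => H (a + d k) - H (b - d k)) (fun k => le_rfl) ?_
  · linarith [p1 k]
  · have := p0 k; exact ⟨by linarith [ht.1], by linarith [ht.2]⟩
  · exact aecover_Ioo_of_Ioc t0 t1
  · have := (hlim.comp (tendsto_nhdsWithin_iff.2 ⟨t0, .of_forall fun k => ?_⟩)).sub
      (hlim'.comp (tendsto_nhdsWithin_iff.2 ⟨t1, .of_forall fun k => ?_⟩))
    · simpa using this
    · have := p0 k; simp only [mem_Ioi]; linarith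
    · have := p0 k; simp only [mem_Iio]; linarith

noncomputable def radM (m : ℕ) : Measure ℝ :=
  (volume.restrict (Ioi (0:ℝ))).withDensity (fun r => ENNReal.ofReal (r ^ m))

lemma mp_val (m : ℕ) : MeasurePreserving (Subtype.val : Ioi (0:ℝ) → ℝ)
    (Measure.volumeIoiPow m) (radM m) := by
  refine ⟨measurable_subtype_coe, ?_⟩
  ext s hs
  rw [Measure.map_apply measurable_subtype_coe hs, Measure.volumeIoiPow, radM,
    withDensity_apply _ (measurable_subtype_coe hs), withDensity_apply _ hs,
    setLIntegral_subtype measurableSet_Ioi _ fun a : ℝ ↦ .ofReal (a ^ m),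
    Measure.restrict_restrict hs, Subtype.image_preimage_coe, inter_comm]

instance (m : ℕ) : SFinite (radM m) := by unfold radM; infer_instance

abbrev sph (n : ℕ) := Metric.sphere (0 : EuclideanSpace ℝ (Fin n)) 1

noncomputable abbrev sig (n : ℕ) : Measure (sph n) :=
  (volume : Measure (EuclideanSpace ℝ (Fin n))).toSphere

lemma polar_mp (n : ℕ) (hn : 1 ≤ n) :
    MeasurePreserving (fun p : sph n × ℝ => p.2 • (p.1 : EuclideanSpace ℝ (Fin n)))
      ((sig n).prod (radM (n - 1))) volume := by
  have : Nonempty (Fin n) := ⟨⟨0, hn⟩⟩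
  have m1 := ((volume : Measure (EuclideanSpace ℝ (Fin n))).measurePreserving_homeomorphUnitSphereProd)
  rw [finrank_euclideanSpace_fin] at m1
  have hm : Measurable (fun p : sph n × ℝ => p.2 • (p.1 : EuclideanSpace ℝ (Fin n))) := by
    fun_prop
  refine ⟨hm, ?_⟩
  have m2 : MeasurePreserving (Prod.map id Subtype.val : sph n × Ioi (0:ℝ) → sph n × ℝ)
      ((sig n).prod (Measure.volumeIoiPow (n-1))) ((sig n).prod (radM (n - 1))) :=
    (MeasurePreserving.id _).prod (mp_val _)
  have m3 : MeasurePreserving (Subtype.val : ({0}ᶜ : Set (EuclideanSpace ℝ (Fin n))) → _)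
    (Measure.comap Subtype.val volume) (volume : Measure (EuclideanSpace ℝ (Fin n))) := by
    refine ⟨measurable_subtype_coe, ?_⟩
    rw [map_comap_subtype_coe (measurableSet_singleton _).compl, restrict_compl_singleton]
  have m4 := m3.comp (m1.symm (homeomorphUnitSphereProd (EuclideanSpace ℝ (Fin n))).toMeasurableEquiv)
  rw [← m2.map_eq, Measure.map_map hm m2.measurable, ← m4.map_eq]
  congr 1

lemma polar_lintegral (n : ℕ) (hn : 1 ≤ n) (f : EuclideanSpace ℝ (Fin n) → ENNReal)
    (hf : Measurable f) : ∫⁻ x, f x = ∫⁻ r in Ioi (0:ℝ), ENNReal.ofReal (r^(n-1)) *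
      ∫⁻ θ, f (r • (θ : EuclideanSpace ℝ (Fin n))) ∂(sig n) := by
  have hf2 : Measurable (fun p : sph n × ℝ => f (p.2 • (p.1 : EuclideanSpace ℝ (Fin n)))) := by
    fun_prop
  rw [← (polar_mp n hn).lintegral_comp hf, lintegral_prod_symm _ hf2.aemeasurable, radM,
    lintegral_withDensity_eq_lintegral_mul]
  · rfl
  · fun_prop
  · exact hf2.lintegral_prod_left'

lemma polar_integral (n : ℕ) (hn : 1 ≤ n) (f : EuclideanSpace ℝ (Fin n) → ℝ)
    (hf : Integrable f) : ∫ x, f x = ∫ r in Ioi (0:ℝ), r^(n-1) *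
      ∫ θ, f (r • (θ : EuclideanSpace ℝ (Fin n))) ∂(sig n) := by
  have h := (polar_mp n hn)
  have hi : Integrable (fun p : sph n × ℝ => f (p.2 • (p.1 : EuclideanSpace ℝ (Fin n))))
      ((sig n).prod (radM (n-1))) := h.integrable_comp_of_integrable hf
  rw [← h.map_eq, integral_map h.measurable.aemeasurable (by rw [h.map_eq]; exact hf.1),
    integral_prod_symm _ hi, radM]
  have : (fun r : ℝ => ENNReal.ofReal (r^(n-1))) = fun r => ((Real.toNNReal (r^(n-1)) : NNReal) : ENNReal) := rfl
  rw [this, integral_withDensity_eq_integral_smul (by fun_prop)]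
  refine setIntegral_congr_fun measurableSet_Ioi fun r hr => ?_
  simp only [NNReal.smul_def, smul_eq_mul]
  rw [Real.coe_toNNReal _ (pow_nonneg (le_of_lt hr) _)]
lemma gauss_half (φ φ' : ℝ → ℝ) (C : ℝ) (hd : ∀ t, 0 < t → HasDerivAt φ (φ' t) t)
    (hc : ContinuousOn φ' (Ioi 0)) (hC : ∀ t, |φ t - φ 0| ≤ C * |t|) :
    ∫⁻ t in Ioi (0:ℝ), ENNReal.ofReal ((φ t - φ 0)^2 * Real.exp (-t^2/2)) ≤
      ∫⁻ t in Ioi (0:ℝ), ENNReal.ofReal ((φ' t)^2 * Real.exp (-t^2/2)) := by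
  have hφc : ContinuousOn φ (Ioi 0) := fun t ht => (hd t ht).continuousAt.continuousWithinAt
  have hne : ∀ t ∈ Ioi (0:ℝ), t ≠ 0 := fun t ht => ne_of_gt ht
  refine oneD_Ioi 0 _ _ (fun t => (φ t - φ 0)^2 * (Real.exp (-t^2/2) / t))
    (fun t => 2 * (φ t - φ 0) * φ' t * (Real.exp (-t^2/2) / t) +
      (φ t - φ 0)^2 * (- Real.exp (-t^2/2) - Real.exp (-t^2/2)/t^2))
    (by fun_prop) (by fun_prop) ?_ (fun t _ => by positivity) ?_ (fun t _ => by positivity)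
    ?_ ?_ ?_
  · have h1 : ContinuousOn (fun t : ℝ => Real.exp (-t^2/2) / t) (Ioi 0) :=
      ContinuousOn.div (by fun_prop) (by fun_prop) hne
    have h2 : ContinuousOn (fun t : ℝ => Real.exp (-t^2/2) / t^2) (Ioi 0) :=
      ContinuousOn.div (by fun_prop) (by fun_prop) (fun t ht => pow_ne_zero 2 (hne t ht))
    fun_prop
  · intro t ht
    have ht0 := hne t ht
    have e1 : HasDerivAt (fun t : ℝ => Real.exp (-t^2/2)) (Real.exp (-t^2/2) * (-t)) t := by
      have : HasDerivAt (fun t : ℝ => -t^2/2) (-t) t := by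
        refine (((hasDerivAt_pow 2 t).neg).div_const 2).congr_deriv ?_
        simp; ring
      exact this.exp
    have e2 := (((hd t ht).sub_const (φ 0)).pow 2).mul (e1.div (hasDerivAt_id t) ht0)
    refine e2.congr_deriv ?_
    simp only [Pi.div_apply, Pi.pow_apply, id]
    field_simp
    norm_num
    ring
  · intro t ht
    have ht0 := hne t ht
    have : 0 ≤ (φ' t - (φ t - φ 0) / t)^2 * Real.exp (-t^2/2) := by positivity
    have e : (φ' t)^2 * Real.exp (-t^2/2) - ((φ t - φ 0)^2 * Real.exp (-t^2/2) + (2 * (φ t - φ 0) * φ' t * (Real.exp (-t^2/2) / t) +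
      (φ t - φ 0)^2 * (- Real.exp (-t^2/2) - Real.exp (-t^2/2)/t^2))) = (φ' t - (φ t - φ 0) / t)^2 * Real.exp (-t^2/2) := by
      field_simp
      ring
    linarith
  · intro t ht
    have : 0 < t := ht
    positivity
  · have hb : Tendsto (fun t : ℝ => C^2 * t) (𝓝[>] 0) (𝓝 0) := by
      have : Tendsto (fun t : ℝ => C^2 * t) (𝓝 0) (𝓝 (C^2 * 0)) :=
        (continuous_const.mul continuous_id).tendsto 0
      rw [mul_zero] at this
      exact this.mono_left nhdsWithin_le_nhds
    refine squeeze_zero' ?_ ?_ hb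
    · filter_upwards [self_mem_nhdsWithin] with t ht
      have : 0 < t := ht
      positivity
    · filter_upwards [self_mem_nhdsWithin] with t ht
      have ht : 0 < t := ht
      have h1 : (φ t - φ 0)^2 ≤ (C * t)^2 := by
        have := hC t
        rw [abs_of_pos ht] at this
        exact sq_le_sq' (by linarith [abs_le.1 this]) (le_of_abs_le this)
      have h2 : Real.exp (-t^2/2) ≤ 1 := Real.exp_le_one_iff.2 (by nlinarith [sq_nonneg t])
      calc (φ t - φ 0)^2 * (Real.exp (-t^2/2) / t) ≤ (C * t)^2 * (1 / t) := by gcongr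
        _ = C^2 * t := by field_simp

lemma lint_neg (f : ℝ → ENNReal) : ∫⁻ t in Iio (0:ℝ), f t = ∫⁻ t in Ioi (0:ℝ), f (-t) := by
  have := (Measure.measurePreserving_neg (volume : Measure ℝ)).setLIntegral_comp_emb
    (MeasurableEquiv.neg ℝ).measurableEmbedding f (Ioi 0)
  rw [this]
  simp

lemma lint_split (f : ℝ → ENNReal) : ∫⁻ t, f t =
    (∫⁻ t in Ioi (0:ℝ), f (-t)) + ∫⁻ t in Ioi (0:ℝ), f t := by
  rw [← lint_neg, ← setLIntegral_univ, ← Iio_union_Ici (a := (0:ℝ)),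
    lintegral_union measurableSet_Ici (by rw [Set.disjoint_left]; intro x; simp),
    setLIntegral_congr Ioi_ae_eq_Ici.symm]

lemma gauss1_lint (φ φ' : ℝ → ℝ) (C : ℝ) (hd : ∀ t, t ≠ 0 → HasDerivAt φ (φ' t) t)
    (hc : ContinuousOn φ' {0}ᶜ) (hC : ∀ t, |φ t - φ 0| ≤ C * |t|) :
    ∫⁻ t, ENNReal.ofReal ((φ t - φ 0)^2 * Real.exp (-t^2/2)) ≤
      ∫⁻ t, ENNReal.ofReal ((φ' t)^2 * Real.exp (-t^2/2)) := by
  rw [lint_split, lint_split (fun t => ENNReal.ofReal ((φ' t)^2 * _))]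
  refine add_le_add ?_ ?_
  · have := gauss_half (fun t => φ (-t)) (fun t => - φ' (-t)) C ?_ ?_ ?_
    · simpa using this
    · intro t ht
      have := (hd (-t) (by linarith)).comp t (hasDerivAt_neg t)
      exact this.congr_deriv (by simp)
    · refine ContinuousOn.neg (hc.comp (by fun_prop) fun t ht => ?_)
      simp only [mem_compl_iff, mem_singleton_iff, neg_eq_zero]
      exact ne_of_gt ht
    · intro t; simpa using hC (-t)
  · exact gauss_half φ φ' C (fun t ht => hd t ht.ne') (hc.mono fun t ht => ne_of_gt ht) hC

noncomputable abbrev gam : Measure ℝ := gaussianReal 0 1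

lemma gam_lint (f : ℝ → ENNReal) (hf : Measurable f) :
    ∫⁻ t, f t ∂gam = ENNReal.ofReal (√(2 * Real.pi))⁻¹ * ∫⁻ t, f t * ENNReal.ofReal (Real.exp (-t^2/2)) := by
  rw [gam, gaussianReal_of_var_ne_zero 0 one_ne_zero, lintegral_withDensity_eq_lintegral_mul _ (measurable_gaussianPDF _ _) hf, ← lintegral_const_mul _ (by fun_prop)]
  refine lintegral_congr fun t => ?_
  simp only [Pi.mul_apply, gaussianPDF, gaussianPDFReal]
  rw [mul_comm (f t), ← mul_assoc, ← ENNReal.ofReal_mul (by positivity)]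
  simp

lemma gam_sq : Integrable (fun t : ℝ => t^2) gam := by
  have := (memLp_id_gaussianReal (μ := 0) (v := 1) 2).integrable_sq
  simpa using this

lemma gauss1 (φ φ' : ℝ → ℝ) (C K : ℝ) (hφ : Continuous φ) (hm : Measurable φ') (hd : ∀ t, t ≠ 0 → HasDerivAt φ (φ' t) t)
    (hc : ContinuousOn φ' {0}ᶜ) (hC : ∀ t, |φ t - φ 0| ≤ C * |t|) (hK : ∀ t, |φ' t| ≤ K) :
    ∫ t, (φ t)^2 ∂gam - (∫ t, φ t ∂gam)^2 ≤ ∫ t, (φ' t)^2 ∂gam := by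
  have hC0 : 0 ≤ C := by have := hC 1; simp at this; exact (abs_nonneg _).trans this
  have hu : MemLp (fun t => φ t - φ 0) 2 gam := by
    refine MemLp.of_le (g := fun t => C * t) ?_ (by fun_prop) (.of_forall fun t => ?_)
    · exact (memLp_id_gaussianReal (μ := 0) (v := 1) 2).const_mul C
    · simpa [abs_of_nonneg hC0] using hC t
  have hu1 : Integrable (fun t => φ t - φ 0) gam := hu.integrable (by norm_num)
  have hu2 := hu.integrable_sq
  have hk : Integrable (fun t => (φ' t)^2) gam := by
    refine Integrable.of_bound (hm.pow_const 2).aestronglyMeasurable (K^2) (.of_forall fun t => ?_)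
    simp only [Real.norm_eq_abs, abs_pow]
    exact pow_le_pow_left₀ (abs_nonneg _) (hK t) 2
  have key : ∫ t, (φ t - φ 0)^2 ∂gam ≤ ∫ t, (φ' t)^2 ∂gam := by
    rw [integral_eq_lintegral_of_nonneg_ae (.of_forall fun t => sq_nonneg _) hu2.1,
      integral_eq_lintegral_of_nonneg_ae (.of_forall fun t => sq_nonneg _) hk.1]
    refine ENNReal.toReal_mono ?_ ?_
    · exact hk.lintegral_lt_top.ne
    · rw [gam_lint _ (by fun_prop), gam_lint _ (by fun_prop)]
      gcongr ENNReal.ofReal (√(2 * Real.pi))⁻¹ * ?_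
      have := gauss1_lint φ φ' C hd hc hC
      simp_rw [ENNReal.ofReal_mul (sq_nonneg _)] at this
      exact this
  have e1 : ∫ t, φ t ∂gam = (∫ t, (φ t - φ 0) ∂gam) + φ 0 := by
    have : ∫ t, φ t ∂gam = ∫ t, ((φ t - φ 0) + φ 0) ∂gam := by simp
    rw [this, integral_add hu1 (integrable_const _)]; simp
  have e2 : ∫ t, (φ t)^2 ∂gam = (∫ t, (φ t - φ 0)^2 ∂gam) + 2 * φ 0 * (∫ t, (φ t - φ 0) ∂gam) + (φ 0)^2 := by
    have : ∫ t, (φ t)^2 ∂gam = ∫ t, ((φ t - φ 0)^2 + 2 * φ 0 * (φ t - φ 0) + (φ 0)^2) ∂gam := by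
      congr 1; ext t; ring
    rw [this, integral_add (by fun_prop) (integrable_const _), integral_add hu2 (by fun_prop), integral_const_mul]; simp
  rw [e2, e1]
  nlinarith [sq_nonneg (∫ t, (φ t - φ 0) ∂gam)]
lemma tens2 {α β : Type*} [MeasurableSpace α] [MeasurableSpace β] (μ : Measure α) (ν : Measure β)
    [IsProbabilityMeasure μ] [IsProbabilityMeasure ν] (Φ : α × β → ℝ) (hΦ : Measurable Φ)
    (p : α → ℝ) (q : β → ℝ) (hp : MemLp p 2 μ) (hq : MemLp q 2 ν) (hp0 : ∀ t, 0 ≤ p t)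
    (hb : ∀ t x, |Φ (t, x)| ≤ p t * q x)
    (U : α → ℝ) (W : β → ℝ) (hU : Integrable U μ) (hW : Integrable W ν)
    (h1 : ∀ t, ∫ x, Φ (t,x)^2 ∂ν - (∫ x, Φ (t,x) ∂ν)^2 ≤ U t)
    (h2 : ∀ x, ∫ t, Φ (t,x)^2 ∂μ - (∫ t, Φ (t,x) ∂μ)^2 ≤ W x) :
    ∫ z, Φ z^2 ∂(μ.prod ν) - (∫ z, Φ z ∂(μ.prod ν))^2 ≤ ∫ t, U t ∂μ + ∫ x, W x ∂ν := by
  have hpq : MemLp (fun z : α × β => p z.1 * q z.2) 2 (μ.prod ν) := by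
    rw [memLp_two_iff_integrable_sq]
    · have := hp.integrable_sq.mul_prod hq.integrable_sq
      refine this.congr (.of_forall fun z => ?_)
      simp only; ring
    · exact (hp.1.comp_fst).mul (hq.1.comp_snd)
  have mΦ : MemLp Φ 2 (μ.prod ν) := by
    refine hpq.of_le hΦ.aestronglyMeasurable (.of_forall fun z => ?_)
    exact (hb z.1 z.2).trans (le_abs_self _)
  set a : α → ℝ := fun t => ∫ x, Φ (t,x) ∂ν with ha
  set b : β → ℝ := fun x => ∫ t, Φ (t,x) ∂μ with hbdef
  have am : StronglyMeasurable a := hΦ.stronglyMeasurable.integral_prod_right'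
  have bm : StronglyMeasurable b := hΦ.stronglyMeasurable.integral_prod_left'
  have hq1 : Integrable q ν := hq.integrable (by norm_num)
  have hp1 : Integrable p μ := hp.integrable (by norm_num)
  have ma : MemLp a 2 μ := by
    refine (hp.mul_const (∫ x, q x ∂ν)).of_le am.aestronglyMeasurable (.of_forall fun t => ?_)
    refine le_trans ?_ (le_abs_self _)
    rw [← integral_const_mul]
    exact norm_integral_le_of_norm_le (hq1.const_mul _) (.of_forall fun x => hb t x)
  have mb : MemLp b 2 ν := by
    refine (hq.const_mul (∫ x, p x ∂μ)).of_le bm.aestronglyMeasurable (.of_forall fun x => ?_)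
    refine le_trans ?_ (le_abs_self _)
    rw [← integral_mul_const]
    exact norm_integral_le_of_norm_le (hp1.mul_const _) (.of_forall fun t => hb t x)
  have ma' : MemLp (fun z : α × β => a z.1) 2 (μ.prod ν) := ma.comp_fst ν
  have mb' : MemLp (fun z : α × β => b z.2) 2 (μ.prod ν) := mb.comp_snd μ
  set m := ∫ z, Φ z ∂(μ.prod ν) with hm
  have i1 : Integrable Φ (μ.prod ν) := mΦ.integrable (by norm_num)
  have ia : Integrable a μ := ma.integrable (by norm_num)
  have ib : Integrable b ν := mb.integrable (by norm_num)
  have ima : ∫ t, a t ∂μ = m := by rw [hm, integral_prod _ i1]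
  have imb : ∫ x, b x ∂ν = m := by rw [hm, integral_prod_symm _ i1]
  have iΦ2 := mΦ.integrable_sq
  have ea : ∫ z, Φ z * a z.1 ∂(μ.prod ν) = ∫ t, a t^2 ∂μ := by
    have j : Integrable (fun z : α × β => Φ z * a z.1) (μ.prod ν) := mΦ.integrable_mul ma'
    rw [integral_prod _ j]
    congr 1; ext t
    simp only [integral_mul_const, ha]; ring
  have eb : ∫ z, Φ z * b z.2 ∂(μ.prod ν) = ∫ x, b x^2 ∂ν := by
    have j : Integrable (fun z : α × β => Φ z * b z.2) (μ.prod ν) := mΦ.integrable_mul mb'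
    rw [integral_prod_symm _ j]
    congr 1; ext x
    simp only [integral_mul_const, hbdef]; ring
  have eab : ∫ z, a z.1 * b z.2 ∂(μ.prod ν) = m^2 := by
    rw [integral_prod_mul a b, ima, imb]; ring
  have ea2 : ∫ z, a z.1^2 ∂(μ.prod ν) = ∫ t, a t^2 ∂μ := by
    have := integral_fun_fst (μ := μ) (ν := ν) (fun t => a t^2)
    simpa using this
  have eb2 : ∫ z, b z.2^2 ∂(μ.prod ν) = ∫ t, b t^2 ∂ν := by
    have := integral_fun_snd (μ := μ) (ν := ν) (fun t => b t^2)
    simpa using this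
  have ea1 : ∫ z, a z.1 ∂(μ.prod ν) = m := by
    have := integral_fun_fst (μ := μ) (ν := ν) a
    simpa [ima] using this
  have eb1 : ∫ z, b z.2 ∂(μ.prod ν) = m := by
    have := integral_fun_snd (μ := μ) (ν := ν) b
    simpa [imb] using this
  have key : ∫ t, a t^2 ∂μ + ∫ x, b x^2 ∂ν ≤ ∫ z, Φ z^2 ∂(μ.prod ν) + m^2 := by
    have hX : MemLp (fun z => Φ z - a z.1 - b z.2) 2 (μ.prod ν) := (mΦ.sub ma').sub mb'
    have hpos := variance_nonneg (fun z => Φ z - a z.1 - b z.2) (μ.prod ν)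
    rw [variance_eq_sub hX] at hpos
    have j6 : Integrable (fun z : α × β => a z.1) (μ.prod ν) := ma'.integrable (by norm_num)
    have j7 : Integrable (fun z : α × β => b z.2) (μ.prod ν) := mb'.integrable (by norm_num)
    have hX1 : ∫ z, (Φ z - a z.1 - b z.2) ∂(μ.prod ν) = - m := by
      have j8 : Integrable (fun z => Φ z - a z.1) (μ.prod ν) := i1.sub j6
      rw [integral_sub j8 j7, integral_sub i1 j6, ea1, eb1, ← hm]; ring
    simp only [Pi.pow_apply] at hpos
    rw [hX1] at hpos
    have j1 : Integrable (fun z : α × β => Φ z * a z.1) (μ.prod ν) := mΦ.integrable_mul ma'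
    have j2 : Integrable (fun z : α × β => Φ z * b z.2) (μ.prod ν) := mΦ.integrable_mul mb'
    have j3 : Integrable (fun z : α × β => a z.1 * b z.2) (μ.prod ν) := ma'.integrable_mul mb'
    have j4 : Integrable (fun z : α × β => a z.1^2) (μ.prod ν) := ma'.integrable_sq
    have j5 : Integrable (fun z : α × β => b z.2^2) (μ.prod ν) := mb'.integrable_sq
    have e : ∫ z, (Φ z - a z.1 - b z.2)^2 ∂(μ.prod ν) = ∫ z, (Φ z^2 + a z.1^2 + b z.2^2
        - 2 * (Φ z * a z.1) - 2 * (Φ z * b z.2) + 2 * (a z.1 * b z.2)) ∂(μ.prod ν) := by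
      congr 1; ext z; ring
    rw [e, integral_add (by fun_prop) (by fun_prop), integral_sub (by fun_prop) (by fun_prop),
      integral_sub (by fun_prop) (by fun_prop), integral_add (by fun_prop) (by fun_prop),
      integral_add (by fun_prop) (by fun_prop), integral_const_mul, integral_const_mul,
      integral_const_mul, ea, eb, eab, ea2, eb2] at hpos
    linarith
  have k1 : ∫ z, Φ z^2 ∂(μ.prod ν) - ∫ t, a t^2 ∂μ ≤ ∫ t, U t ∂μ := by
    rw [integral_prod _ iΦ2, ← integral_sub iΦ2.integral_prod_left ma.integrable_sq]
    exact integral_mono (iΦ2.integral_prod_left.sub ma.integrable_sq) hU h1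
  have k2 : ∫ z, Φ z^2 ∂(μ.prod ν) - ∫ t, b t^2 ∂ν ≤ ∫ t, W t ∂ν := by
    rw [integral_prod_symm _ iΦ2, ← integral_sub iΦ2.integral_prod_right mb.integrable_sq]
    exact integral_mono (iΦ2.integral_prod_right.sub mb.integrable_sq) hW h2
  linarith

lemma tens_tr (γ : Measure ℝ) [IsProbabilityMeasure γ] (n : ℕ) (f : (Fin (n+1) → ℝ) → ℝ) :
    ∫ x, f x ∂(Measure.pi fun _ => γ) =
      ∫ z : ℝ × (Fin n → ℝ), f (Fin.cons z.1 z.2) ∂(γ.prod (Measure.pi fun _ => γ)) := by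
  have mp := (measurePreserving_piFinSuccAbove (fun _ : Fin (n+1) => γ) 0).symm
  rw [← mp.integral_comp' f]
  congr 1
  ext z
  congr 1
  simp [MeasurableEquiv.piFinSuccAbove_symm_apply, Fin.insertNthEquiv]

lemma tens_mcons (n : ℕ) : Measurable (fun z : ℝ × (Fin n → ℝ) => (Fin.cons z.1 z.2 : Fin (n+1) → ℝ)) := by
  rw [measurable_pi_iff]
  intro i
  refine Fin.cases ?_ (fun j => ?_) i
  · simpa using measurable_fst
  · simp only [Fin.cons_succ]; fun_prop

lemma tens_ccons (n : ℕ) (t : ℝ) : Continuous (fun x : Fin n → ℝ => (Fin.cons t x : Fin (n+1) → ℝ)) := by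
  rw [continuous_pi_iff]
  intro i
  refine Fin.cases ?_ (fun j => ?_) i
  · simpa using continuous_const
  · simp only [Fin.cons_succ]; fun_prop

lemma tens_one (γ : Measure ℝ) [IsProbabilityMeasure γ] (hγ : MemLp (fun t : ℝ => t) 2 γ) :
    MemLp (fun t : ℝ => 1 + |t|) 2 γ := by
  have h1 : MemLp (fun _ : ℝ => (1:ℝ)) 2 γ := memLp_const 1
  have h2 : MemLp (fun t : ℝ => |t|) 2 γ := hγ.norm
  exact h1.add h2

lemma tens_prod (γ : Measure ℝ) [IsProbabilityMeasure γ] (hγ : MemLp (fun t : ℝ => t) 2 γ) (n : ℕ) :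
    MemLp (fun x : Fin n → ℝ => ∏ i, (1 + |x i|)) 2 (Measure.pi fun _ => γ) := by
  have hm : AEStronglyMeasurable (fun x : Fin n → ℝ => ∏ i, (1 + |x i|)) (Measure.pi fun _ => γ) := by
    apply Continuous.aestronglyMeasurable
    fun_prop
  rw [memLp_two_iff_integrable_sq hm]
  simp_rw [← Finset.prod_pow]
  exact Integrable.fintype_prod (f := fun _ t => (1 + |t|)^2) (fun i => (tens_one γ hγ).integrable_sq)

lemma tensor (γ : Measure ℝ) [IsProbabilityMeasure γ] (hγ : MemLp (fun t : ℝ => t) 2 γ) (K : ℝ) (n : ℕ) :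
    ∀ (F : (Fin n → ℝ) → ℝ) (G : Fin n → (Fin n → ℝ) → ℝ) (_ : Continuous F) (C : ℝ) (_ : 0 ≤ C)
    (_ : ∀ x, |F x| ≤ C * ∏ i, (1 + |x i|)) (_ : ∀ i, Measurable (G i))
    (_ : ∀ i x, |G i x| ≤ K)
    (_ : ∀ i x, ∫ t, F (Function.update x i t)^2 ∂γ - (∫ t, F (Function.update x i t) ∂γ)^2
      ≤ ∫ t, G i (Function.update x i t) ∂γ),
    ∫ x, F x^2 ∂(Measure.pi fun _ => γ) - (∫ x, F x ∂(Measure.pi fun _ => γ))^2 ≤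
      ∑ i, ∫ x, G i x ∂(Measure.pi fun _ => γ) := by
  have h1γ := tens_one γ hγ
  have hprod := tens_prod γ hγ
  induction n with
  | zero =>
    intro F G _ C _ _ _ _ _
    have h0 : ∀ x, F x = F 0 := fun x => by congr 1; exact Subsingleton.elim _ _
    simp only [h0]; simp
  | succ n ih =>
    intro F G hF C hC0 hC hG hGK h
    have tr := tens_tr γ n
    have mcons := tens_mcons n
    have ccons := tens_ccons n
    rw [tr (fun x => F x^2), tr F, Fin.sum_univ_succ, tr (G 0),
      Finset.sum_congr rfl (fun i _ => tr (G (Fin.succ i)))]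
    have iG : ∀ i, Integrable (fun z : ℝ × (Fin n → ℝ) => G i (Fin.cons z.1 z.2))
        (γ.prod (Measure.pi fun _ => γ)) := fun i =>
      Integrable.of_bound ((hG i).comp mcons).aestronglyMeasurable K (.of_forall fun z => hGK _ _)
    rw [integral_prod_symm _ (iG 0), add_comm (∫ y, ∫ x, G 0 (Fin.cons x y) ∂γ ∂(Measure.pi fun _ : Fin n => γ)),
      ← integral_finsetSum _ (fun i _ => iG (Fin.succ i)),
      integral_prod _ (integrable_finsetSum _ (fun i _ => iG (Fin.succ i)))]
    refine tens2 γ (Measure.pi fun _ => γ) (fun z => F (Fin.cons z.1 z.2)) (hF.measurable.comp mcons)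
      (fun t => C * (1 + |t|)) (fun x => ∏ i, (1 + |x i|)) (h1γ.const_mul C) (hprod n)
      (fun t => by positivity) (fun t x => ?_)
      (fun t => ∫ y, ∑ i : Fin n, G i.succ (Fin.cons t y) ∂(Measure.pi fun _ => γ))
      (fun y => ∫ t, G 0 (Fin.cons t y) ∂γ)
      (integrable_finsetSum _ (fun i _ => iG (Fin.succ i))).integral_prod_left
      (iG 0).integral_prod_right (fun t => ?_) (fun x => ?_)
    · refine (hC _).trans (le_of_eq ?_)
      rw [Fin.prod_univ_succ]; simp [mul_assoc]
    · have := ih (fun x => F (Fin.cons t x)) (fun i x => G i.succ (Fin.cons t x))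
        (hF.comp (ccons t)) (C * (1 + |t|)) (by positivity) (fun x => ?_) 
        (fun i => (hG i.succ).comp (ccons t).measurable) (fun i x => hGK _ _) (fun i x => ?_)
      · refine this.trans (le_of_eq ?_)
        rw [integral_finsetSum]
        intro i _
        exact Integrable.of_bound ((hG i.succ).comp (ccons t).measurable).aestronglyMeasurable K
          (.of_forall fun z => hGK _ _)
      · refine (hC _).trans (le_of_eq ?_)
        rw [Fin.prod_univ_succ]; simp [mul_assoc]
      · have := h i.succ (Fin.cons t x)
        simpa only [← Fin.cons_update] using this
    · have := h 0 (Fin.cons 0 x)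
      simpa only [Fin.update_cons_zero] using this

lemma gam_pi_density (n : ℕ) : (Measure.pi fun _ : Fin n => gam) =
    (volume : Measure (Fin n → ℝ)).withDensity (fun x => ENNReal.ofReal (∏ i, gaussianPDFReal 0 1 (x i))) := by
  refine Measure.pi_eq (fun s hs => ?_)
  have hint : Integrable (fun x : Fin n → ℝ => ∏ i, gaussianPDFReal 0 1 (x i)) := by
    rw [volume_pi]
    exact Integrable.fintype_prod (f := fun _ t => gaussianPDFReal 0 1 t) (fun i => integrable_gaussianPDFReal 0 1)
  have h0 : ∀ x : Fin n → ℝ, 0 ≤ ∏ i, gaussianPDFReal 0 1 (x i) := fun x =>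
    Finset.prod_nonneg fun i _ => gaussianPDFReal_nonneg _ _ _
  rw [withDensity_apply _ (MeasurableSet.univ_pi hs),
    ← ofReal_integral_eq_lintegral_ofReal hint.integrableOn (.of_forall h0), volume_pi, Measure.restrict_pi_pi,
    integral_fintype_prod_eq_prod (fun _ t => gaussianPDFReal 0 1 t), ENNReal.ofReal_prod_of_nonneg]
  · refine Finset.prod_congr rfl fun i _ => ?_
    rw [gam, gaussianReal_apply_eq_integral _ one_ne_zero]
  · intro i _
    exact integral_nonneg fun t => gaussianPDFReal_nonneg _ _ _

lemma gam_pi_integral (n : ℕ) (F : EuclideanSpace ℝ (Fin n) → ℝ) :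
    ∫ x, F (WithLp.toLp 2 x) ∂(Measure.pi fun _ : Fin n => gam) =
      ((√(2 * Real.pi))⁻¹)^n * ∫ y : EuclideanSpace ℝ (Fin n), F y * Real.exp (-‖y‖^2/2) := by
  have hm : Measurable (fun x : Fin n → ℝ => ∏ i, gaussianPDFReal 0 1 (x i)) := by
    refine Finset.measurable_prod _ fun i _ => ?_
    exact (measurable_gaussianPDFReal 0 1).comp (measurable_pi_apply i)
  have h0 : ∀ x : Fin n → ℝ, 0 ≤ ∏ i, gaussianPDFReal 0 1 (x i) := fun x =>
    Finset.prod_nonneg fun i _ => gaussianPDFReal_nonneg _ _ _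
  rw [gam_pi_density, integral_withDensity_eq_integral_toReal_smul (by fun_prop) (.of_forall fun x => ENNReal.ofReal_lt_top),
    ← integral_const_mul, ← (PiLp.volume_preserving_toLp (Fin n)).integral_comp (MeasurableEquiv.toLp 2 _).measurableEmbedding]
  congr 1; ext x
  rw [ENNReal.toReal_ofReal (h0 x), EuclideanSpace.norm_sq_eq]
  simp only [gaussianPDFReal, smul_eq_mul, Finset.prod_mul_distrib, ← Real.exp_sum]
  simp [Finset.sum_div, neg_div]
  ring
lemma line_deriv {E : Type*} [NormedAddCommGroup E] [InnerProductSpace ℝ E] [CompleteSpace E]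
    (f : E → ℝ) (hf : ContDiff ℝ 1 f) (y : ℝ → E) (e : E) (t : ℝ)
    (hy : HasDerivAt y e t) (h0 : y t ≠ 0) :
    HasDerivAt (fun s => ‖y s‖ * f (‖y s‖⁻¹ • y s))
      (inner ℝ (f (‖y t‖⁻¹ • y t) • (‖y t‖⁻¹ • y t) + gradient f (‖y t‖⁻¹ • y t)
        - inner ℝ (gradient f (‖y t‖⁻¹ • y t)) (‖y t‖⁻¹ • y t) • (‖y t‖⁻¹ • y t)) e) t := by
  have hN0 : ‖y t‖ ≠ 0 := norm_ne_zero_iff.mpr h0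
  have hN : HasDerivAt (fun s => ‖y s‖) (inner ℝ (y t) e / ‖y t‖) t := by
    have h1 := (hy.norm_sq).sqrt (by positivity)
    simp only [Real.sqrt_sq (norm_nonneg _)] at h1
    refine h1.congr_deriv ?_
    field_simp
  have hth := (hN.inv hN0).smul hy
  have hfd : HasFDerivAt f (fderiv ℝ f (‖y t‖⁻¹ • y t)) (‖y t‖⁻¹ • y t) :=
    (hf.differentiable (by norm_num)).differentiableAt.hasFDerivAt
  have hc := hN.mul (hfd.comp_hasDerivAt t hth)
  refine hc.congr_deriv ?_
  have hg : ∀ v, fderiv ℝ f (‖y t‖⁻¹ • y t) v = inner ℝ (gradient f (‖y t‖⁻¹ • y t)) v := by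
    intro v
    simp [gradient]
  simp only [Function.comp_apply, hg, Pi.inv_apply, Pi.smul_apply']
  simp only [inner_add_left, inner_sub_left, inner_smul_left, inner_add_right, inner_smul_right, conj_trivial]
  field_simp
  ring

lemma gauss_mom (n : ℕ) (hn : 1 ≤ n) :
    ∫ r in Ioi (0:ℝ), r^(n+1) * Real.exp (-r^2/2) = n * ∫ r in Ioi (0:ℝ), r^(n-1) * Real.exp (-r^2/2) := by
  have key : ∀ k : ℕ, ∫ r in Ioi (0:ℝ), r^k * Real.exp (-r^2/2) =
    (1/2:ℝ) ^ (-((k:ℝ)+1)/2) * (1/2) * Real.Gamma (((k:ℝ)+1)/2) := by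
    intro k
    rw [← integral_rpow_mul_exp_neg_mul_rpow (p := 2) (q := k) (b := 1/2) (by norm_num) (by have : (0:ℝ) ≤ k := by positivity
                                                                                            linarith) (by norm_num)]
    refine setIntegral_congr_fun measurableSet_Ioi fun r hr => ?_
    simp only [Real.rpow_natCast]
    congr 2
    norm_num; ring
  have hn0 : (n:ℝ) ≠ 0 := by positivity
  rw [key, key]
  have e1 : (((n+1:ℕ):ℝ)+1)/2 = (n:ℝ)/2 + 1 := by push_cast; ring
  have e2 : (((n-1:ℕ):ℝ)+1)/2 = (n:ℝ)/2 := by push_cast [Nat.cast_sub hn]; ring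
  have e3 : -(((n+1:ℕ):ℝ)+1)/2 = -(n:ℝ)/2 - 1 := by push_cast; ring
  have e4 : -(((n-1:ℕ):ℝ)+1)/2 = -(n:ℝ)/2 := by push_cast [Nat.cast_sub hn]; ring
  rw [e1, e2, e3, e4, Real.Gamma_add_one (by positivity), Real.rpow_sub_one (by norm_num)]
  ring

lemma gauss_mom_pos (n : ℕ) : 0 < ∫ r in Ioi (0:ℝ), r^n * Real.exp (-r^2/2) := by
  have key : ∀ k : ℕ, ∫ r in Ioi (0:ℝ), r^k * Real.exp (-r^2/2) =
    (1/2:ℝ) ^ (-((k:ℝ)+1)/2) * (1/2) * Real.Gamma (((k:ℝ)+1)/2) := by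
    intro k
    rw [← integral_rpow_mul_exp_neg_mul_rpow (p := 2) (q := k) (b := 1/2) (by norm_num) (by have : (0:ℝ) ≤ k := by positivity
                                                                                            linarith) (by norm_num)]
    refine setIntegral_congr_fun measurableSet_Ioi fun r hr => ?_
    simp only [Real.rpow_natCast]
    congr 2
    norm_num; ring
  rw [key]
  have : 0 < Real.Gamma (((n:ℝ)+1)/2) := Real.Gamma_pos_of_pos (by positivity)
  positivity

lemma mvt_bound (φ φ' : ℝ → ℝ) (K : ℝ) (hφ : Continuous φ) (hd : ∀ t, t ≠ 0 → HasDerivAt φ (φ' t) t)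
    (hK : ∀ t, |φ' t| ≤ K) (t : ℝ) : |φ t - φ 0| ≤ K * |t| := by
  rcases lt_trichotomy t 0 with h | h | h
  · obtain ⟨c, hc, he⟩ := exists_hasDerivAt_eq_slope φ φ' h hφ.continuousOn (fun x hx => hd x (ne_of_lt hx.2))
    have : φ t - φ 0 = φ' c * t := by
      have h' := h.ne
      rw [he, zero_sub]; field_simp; ring
    rw [this, abs_mul]; gcongr; exact hK c
  · simp [h]
  · obtain ⟨c, hc, he⟩ := exists_hasDerivAt_eq_slope φ φ' h hφ.continuousOn (fun x hx => hd x (ne_of_gt hx.1))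
    have : φ t - φ 0 = φ' c * t := by
      rw [he, sub_zero]; field_simp
    rw [this, abs_mul]; gcongr; exact hK c

noncomputable def dirn {n : ℕ} (y : EuclideanSpace ℝ (Fin n)) : EuclideanSpace ℝ (Fin n) := ‖y‖⁻¹ • y

lemma dirn_norm_le {n : ℕ} (y : EuclideanSpace ℝ (Fin n)) : ‖dirn y‖ ≤ 1 := by
  unfold dirn
  rw [norm_smul, norm_inv, norm_norm]
  exact inv_mul_le_one

lemma dirn_meas {n : ℕ} : Measurable (dirn (n := n)) := by
  unfold dirn; fun_prop

lemma dirn_cont {n : ℕ} : ContinuousOn (dirn (n := n)) {0}ᶜ := by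
  unfold dirn
  refine ContinuousOn.smul (ContinuousOn.inv₀ continuous_norm.continuousOn fun x hx => ?_) continuousOn_id
  simpa using hx

lemma dirn_smul {n : ℕ} (r : ℝ) (hr : 0 < r) (θ : sph n) : dirn (r • (θ : EuclideanSpace ℝ (Fin n))) = θ := by
  have : ‖(θ : EuclideanSpace ℝ (Fin n))‖ = 1 := by simp
  unfold dirn
  rw [norm_smul, this, Real.norm_of_nonneg hr.le, mul_one, smul_smul, inv_mul_cancel₀ hr.ne', one_smul]

lemma grad_cont {n : ℕ} (f : EuclideanSpace ℝ (Fin n) → ℝ) (hf : ContDiff ℝ 1 f) : Continuous (gradient f) := by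
  unfold gradient
  exact (LinearIsometryEquiv.continuous _).comp (hf.continuous_fderiv (by norm_num))

noncomputable def vf {n : ℕ} (f : EuclideanSpace ℝ (Fin n) → ℝ) (θ : EuclideanSpace ℝ (Fin n)) : EuclideanSpace ℝ (Fin n) :=
  f θ • θ + gradient f θ - inner ℝ (gradient f θ) θ • θ

lemma vf_cont {n : ℕ} (f : EuclideanSpace ℝ (Fin n) → ℝ) (hf : ContDiff ℝ 1 f) : Continuous (vf f) := by
  unfold vf
  have := grad_cont f hf
  have := hf.continuous
  fun_prop

lemma vf_norm {n : ℕ} (f : EuclideanSpace ℝ (Fin n) → ℝ) (θ : sph n) :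
    ‖vf f θ‖^2 = f θ^2 + (‖gradient f θ‖^2 - (inner ℝ (gradient f (θ : EuclideanSpace ℝ (Fin n))) (θ : EuclideanSpace ℝ (Fin n)))^2) := by
  have h1 : ‖(θ : EuclideanSpace ℝ (Fin n))‖ = 1 := by simp
  unfold vf
  rw [← real_inner_self_eq_norm_sq, ← real_inner_self_eq_norm_sq]
  have h2 : inner ℝ (θ : EuclideanSpace ℝ (Fin n)) (θ : EuclideanSpace ℝ (Fin n)) = (1:ℝ) := by
    rw [real_inner_self_eq_norm_sq, h1]; norm_num
  simp only [inner_add_left, inner_sub_left, inner_smul_left, inner_add_right, inner_sub_right, inner_smul_right, conj_trivial, h2]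
  rw [real_inner_comm (gradient f (θ : EuclideanSpace ℝ (Fin n)))  (θ : EuclideanSpace ℝ (Fin n))]
  ring

lemma ball_bound {n : ℕ} {X : Type*} [SeminormedAddCommGroup X] (u : EuclideanSpace ℝ (Fin n) → X) (hu : Continuous u) :
    ∃ M : ℝ, 0 ≤ M ∧ ∀ x, ‖x‖ ≤ 1 → ‖u x‖ ≤ M := by
  obtain ⟨M, hM⟩ := (isCompact_closedBall (0 : EuclideanSpace ℝ (Fin n)) 1).exists_bound_of_continuousOn hu.continuousOn
  refine ⟨M, (norm_nonneg _).trans (hM 0 (by simp)), fun x hx => hM x (by simpa using hx)⟩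

lemma g_cont {n : ℕ} (f : EuclideanSpace ℝ (Fin n) → ℝ) (hf : Continuous f) : Continuous (fun y => ‖y‖ * f (dirn y)) := by
  obtain ⟨M, hM0, hM⟩ := ball_bound f hf
  rw [continuous_iff_continuousAt]
  intro y
  by_cases hy : y = 0
  · subst hy
    unfold ContinuousAt
    simp only [norm_zero, zero_mul]
    refine squeeze_zero_norm (a := fun y => ‖y‖ * M) (fun y => ?_) ?_
    · rw [norm_mul, norm_norm]
      gcongr
      exact hM _ (dirn_norm_le y)
    · have : Continuous (fun y : EuclideanSpace ℝ (Fin n) => ‖y‖ * M) := by fun_prop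
      have := this.tendsto 0
      simpa using this
  · have h1 : ContinuousAt (dirn (n := n)) y := dirn_cont.continuousAt (isOpen_compl_singleton.mem_nhds hy)
    have h2 : ContinuousAt (fun y => f (dirn y)) y := hf.continuousAt.comp h1
    exact continuous_norm.continuousAt.mul h2

lemma one_sum_prod {ι : Type*} (s : Finset ι) (a : ι → ℝ) (ha : ∀ i, 0 ≤ a i) :
    1 + ∑ i ∈ s, a i ≤ ∏ i ∈ s, (1 + a i) := by
  classical
  induction s using Finset.induction_on with
  | empty => simp
  | insert i s hi ih =>
    rw [Finset.sum_insert hi, Finset.prod_insert hi]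
    have h1 := ha i
    have h2 : 0 ≤ ∑ j ∈ s, a j := Finset.sum_nonneg fun j _ => ha j
    nlinarith

lemma norm_le_prod {n : ℕ} (x : Fin n → ℝ) : ‖WithLp.toLp 2 x‖ ≤ ∏ i, (1 + |x i|) := by
  have h1 : ‖WithLp.toLp 2 x‖ ≤ ∑ i, |x i| := by
    rw [EuclideanSpace.norm_eq]
    refine Real.sqrt_le_iff.mpr ⟨by positivity, ?_⟩
    simp only [Real.norm_eq_abs]
    exact Finset.sum_sq_le_sq_sum_of_nonneg fun i _ => abs_nonneg _
  have h2 : 1 + ∑ i, |x i| ≤ ∏ i, (1 + |x i|) := one_sum_prod _ _ fun i => abs_nonneg _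
  linarith

lemma gauss_poinc {n : ℕ} (f : EuclideanSpace ℝ (Fin n) → ℝ) (hf : ContDiff ℝ 1 f) :
    ∫ x, (‖WithLp.toLp 2 x‖ * f (dirn (WithLp.toLp 2 x)))^2 ∂(Measure.pi fun _ : Fin n => gam)
      - (∫ x, (‖WithLp.toLp 2 x‖ * f (dirn (WithLp.toLp 2 x))) ∂(Measure.pi fun _ : Fin n => gam))^2
      ≤ ∫ x, ‖vf f (dirn (WithLp.toLp 2 x))‖^2 ∂(Measure.pi fun _ : Fin n => gam) := by
  obtain ⟨M, hM0, hM⟩ := ball_bound f hf.continuous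
  obtain ⟨K, hK0, hK⟩ := ball_bound (vf f) (vf_cont f hf)
  have hc := g_cont f hf.continuous
  have hvm : Measurable (fun y : EuclideanSpace ℝ (Fin n) => vf f (dirn y)) := (vf_cont f hf).measurable.comp dirn_meas
  have hvi : ∀ i (x : Fin n → ℝ), |vf f (dirn (WithLp.toLp 2 x)) i| ≤ K := fun i x =>
    (PiLp.norm_apply_le (vf f (dirn (WithLp.toLp 2 x))) i).trans (hK _ (dirn_norm_le _))
  have hvmi : ∀ i, Measurable (fun x : Fin n → ℝ => vf f (dirn (WithLp.toLp 2 x)) i) := fun i => by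
    have : Measurable (fun y : EuclideanSpace ℝ (Fin n) => y i) := by fun_prop
    exact this.comp (hvm.comp (by fun_prop))
  have hb : ∀ i (x : Fin n → ℝ), |(vf f (dirn (WithLp.toLp 2 x)) i)^2| ≤ K^2 := fun i x => by
    rw [abs_pow]; gcongr; exact hvi i x
  have := tensor gam (by simpa [Function.id_def] using memLp_id_gaussianReal (μ := 0) (v := 1) 2) (K^2) n
    (fun x => ‖WithLp.toLp 2 x‖ * f (dirn (WithLp.toLp 2 x)))
    (fun i x => (vf f (dirn (WithLp.toLp 2 x)) i)^2) (hc.comp (by fun_prop)) M hM0 (fun x => ?_)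
    (fun i => (hvmi i).pow_const 2) hb (fun i x => ?_)
  · refine this.trans (le_of_eq ?_)
    rw [← integral_finsetSum]
    · congr 1; ext x
      rw [EuclideanSpace.norm_sq_eq]; simp
    · intro i _
      exact Integrable.of_bound ((hvmi i).pow_const 2).aestronglyMeasurable (K^2) (.of_forall fun x => hb i x)
  · rw [abs_mul, abs_norm, mul_comm]
    have h1 := hM _ (dirn_norm_le (WithLp.toLp 2 x))
    have h2 := norm_le_prod x
    exact mul_le_mul h1 h2 (norm_nonneg _) hM0
  · have hcu : Continuous (fun t : ℝ => WithLp.toLp 2 (Function.update x i t)) := by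
      exact (PiLp.continuous_toLp 2 _).comp (continuous_const.update i continuous_id)
    have hne : ∀ t : ℝ, t ≠ 0 → WithLp.toLp 2 (Function.update x i t) ≠ 0 := fun t ht h => by
      apply ht
      have := congrArg (fun y : EuclideanSpace ℝ (Fin n) => y i) h
      simpa using this
    have hcφ : Continuous (fun t => ‖WithLp.toLp 2 (Function.update x i t)‖ * f (dirn (WithLp.toLp 2 (Function.update x i t)))) := hc.comp hcu
    have hd : ∀ t : ℝ, t ≠ 0 → HasDerivAt (fun t => ‖WithLp.toLp 2 (Function.update x i t)‖ * f (dirn (WithLp.toLp 2 (Function.update x i t))))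
        (vf f (dirn (WithLp.toLp 2 (Function.update x i t))) i) t := by
      intro t ht
      have h1 : HasDerivAt (fun t : ℝ => WithLp.toLp 2 (Function.update x i t)) (EuclideanSpace.single i (1:ℝ)) t := by
        have h3 := hasDerivAt_update x i t
        have h4 := ((PiLp.continuousLinearEquiv 2 ℝ (fun _ : Fin n => ℝ)).symm).hasFDerivAt.comp_hasDerivAt t h3
        exact h4
      have h2 := line_deriv f hf _ _ t h1 (hne t ht)
      refine h2.congr_deriv ?_
      rw [EuclideanSpace.inner_single_right]
      simp [vf, dirn]
    have hφK : ∀ t : ℝ, |vf f (dirn (WithLp.toLp 2 (Function.update x i t))) i| ≤ K := fun t => hvi i _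
    refine gauss1 _ (fun t => vf f (dirn (WithLp.toLp 2 (Function.update x i t))) i) K K hcφ ?_ hd ?_
      (mvt_bound _ _ K hcφ hd hφK) hφK
    · exact (hvmi i).comp (measurable_update x)
    · have h1 : ContinuousOn (fun t : ℝ => dirn (WithLp.toLp 2 (Function.update x i t))) {0}ᶜ :=
        dirn_cont.comp hcu.continuousOn (fun t ht => hne t ht)
      have h2 := (vf_cont f hf).comp_continuousOn h1
      have h3 : Continuous (fun y : EuclideanSpace ℝ (Fin n) => y i) := by fun_prop
      exact h3.comp_continuousOn h2
lemma sph_int {n : ℕ} {u : sph n → ℝ} (hu : Continuous u) : Integrable u (sig n) :=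
  hu.integrable_of_hasCompactSupport (HasCompactSupport.of_compactSpace u)

lemma gauss_norm_int {n : ℕ} (hn : 1 ≤ n) (k : ℕ) :
    Integrable (fun y : EuclideanSpace ℝ (Fin n) => ‖y‖^k * Real.exp (-‖y‖^2/2)) := by
  have : Nonempty (Fin n) := ⟨⟨0, hn⟩⟩
  rw [integrable_fun_norm_addHaar (μ := volume) (f := fun r => r^k * Real.exp (-r^2/2))]
  rw [finrank_euclideanSpace_fin]
  have h := integrableOn_rpow_mul_exp_neg_mul_sq (b := 1/2) (by norm_num) (s := ((n - 1 + k : ℕ):ℝ))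
    (by have : (0:ℝ) ≤ ((n - 1 + k : ℕ):ℝ) := by positivity
        linarith)
  refine h.congr_fun (fun r hr => ?_) measurableSet_Ioi
  simp only [Real.rpow_natCast, smul_eq_mul, pow_add]
  rw [show -(1/2) * r^2 = -r^2/2 by ring]; ring

lemma polar_gauss {n : ℕ} (hn : 1 ≤ n) (k : ℕ) (u : EuclideanSpace ℝ (Fin n) → ℝ) (hu : Continuous u) :
    ∫ y : EuclideanSpace ℝ (Fin n), ‖y‖^k * u (dirn y) * Real.exp (-‖y‖^2/2) =
      (∫ r in Ioi (0:ℝ), r^(n-1+k) * Real.exp (-r^2/2)) * ∫ θ : sph n, u θ ∂(sig n) := by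
  obtain ⟨M, hM0, hM⟩ := ball_bound u hu
  have hm : Measurable (fun y => u (dirn y)) := hu.measurable.comp dirn_meas
  have hi : Integrable (fun y : EuclideanSpace ℝ (Fin n) => ‖y‖^k * u (dirn y) * Real.exp (-‖y‖^2/2)) := by
    refine ((gauss_norm_int hn k).const_mul M).mono' ?_ (.of_forall fun y => ?_)
    · apply Measurable.aestronglyMeasurable
      exact ((measurable_norm.pow_const k).mul hm).mul (by fun_prop)
    · rw [norm_mul, norm_mul, norm_pow, norm_norm, Real.norm_of_nonneg (Real.exp_pos _).le]
      have := hM _ (dirn_norm_le y)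
      calc _ ≤ ‖y‖^k * M * Real.exp (-‖y‖^2/2) := by gcongr
        _ = _ := by ring
  rw [polar_integral n hn _ hi, ← integral_mul_const]
  refine setIntegral_congr_fun measurableSet_Ioi fun r hr => ?_
  have hr' : 0 < r := hr
  have : ∀ θ : sph n, ‖r • (θ : EuclideanSpace ℝ (Fin n))‖ = r := fun θ => by
    rw [norm_smul, Real.norm_of_nonneg hr'.le]; simp
  simp only [dirn_smul r hr', this, integral_mul_const, integral_const_mul, pow_add]
  ring

lemma sphere_poinc {n : ℕ} (hn : 1 ≤ n) (f : EuclideanSpace ℝ (Fin n) → ℝ) (hf : ContDiff ℝ 1 f)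
    (h0 : ∫ θ : sph n, f θ ∂(sig n) = 0) :
    ((n:ℝ) - 1) * ∫ θ : sph n, f θ ^ 2 ∂(sig n) ≤
      ∫ θ : sph n, (‖gradient f θ‖^2 - (inner ℝ (gradient f (θ : EuclideanSpace ℝ (Fin n))) (θ : EuclideanSpace ℝ (Fin n)))^2) ∂(sig n) := by
  have h := gauss_poinc f hf
  have hg := grad_cont f hf
  have hv := vf_cont f hf
  have hfc := hf.continuous
  rw [gam_pi_integral n (fun y => (‖y‖ * f (dirn y))^2), gam_pi_integral n (fun y => (‖y‖ * f (dirn y))),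
    gam_pi_integral n (fun y => ‖vf f (dirn y)‖^2)] at h
  have e1 := polar_gauss hn 2 (fun y => f y^2) (by fun_prop)
  have e2 := polar_gauss hn 1 (fun y => f y) (by fun_prop)
  have e3 := polar_gauss hn 0 (fun y => ‖vf f y‖^2) (by fun_prop)
  simp only [pow_one, pow_zero, one_mul, ← mul_pow, h0, mul_zero, add_zero] at e1 e2 e3
  rw [e1, e2, e3, show n - 1 + 2 = n + 1 by omega, gauss_mom n hn] at h
  have hc : 0 < ((√(2 * Real.pi))⁻¹)^n := by positivity
  have hm := gauss_mom_pos (n-1)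
  have hle : (n:ℝ) * ∫ θ : sph n, f θ^2 ∂(sig n) ≤ ∫ θ : sph n, ‖vf f θ‖^2 ∂(sig n) := by
    have : (((√(2 * Real.pi))⁻¹)^n * ∫ r in Ioi (0:ℝ), r^(n-1) * Real.exp (-r^2/2)) * ((n:ℝ) * ∫ θ : sph n, f θ^2 ∂(sig n))
      ≤ (((√(2 * Real.pi))⁻¹)^n * ∫ r in Ioi (0:ℝ), r^(n-1) * Real.exp (-r^2/2)) * ∫ θ : sph n, ‖vf f θ‖^2 ∂(sig n) := by
      linarith
    exact le_of_mul_le_mul_left this (by positivity)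
  simp_rw [vf_norm] at hle
  rw [integral_add (sph_int (by fun_prop)) (sph_int (by fun_prop))] at hle
  linarith
section
noncomputable def sS (n : ℕ) : ℝ := (sig n).real univ

lemma sS_pos {n : ℕ} (hn : 1 ≤ n) : 0 < sS n := by
  have : Nonempty (Fin n) := ⟨⟨0, hn⟩⟩
  have h : Nontrivial (EuclideanSpace ℝ (Fin n)) := by infer_instance
  unfold sS sig
  rw [Measure.toSphere_real_apply_univ, finrank_euclideanSpace_fin]
  have : 0 < (volume : Measure (EuclideanSpace ℝ (Fin n))).real (Metric.ball 0 1) :=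
    ENNReal.toReal_pos (Metric.measure_ball_pos _ _ one_pos).ne' measure_ball_lt_top.ne
  have : (0:ℝ) < n := by exact_mod_cast hn
  positivity

noncomputable def rd {n : ℕ} (ψ : EuclideanSpace ℝ (Fin n) → ℝ) (r : ℝ) (θ : sph n) : ℝ :=
  inner ℝ (gradient ψ (r • (θ : EuclideanSpace ℝ (Fin n)))) (θ : EuclideanSpace ℝ (Fin n))

noncomputable def sm {n : ℕ} (ψ : EuclideanSpace ℝ (Fin n) → ℝ) (r : ℝ) : ℝ :=
  (sS n)⁻¹ * ∫ θ : sph n, ψ (r • (θ : EuclideanSpace ℝ (Fin n))) ∂(sig n)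

noncomputable def smd {n : ℕ} (ψ : EuclideanSpace ℝ (Fin n) → ℝ) (r : ℝ) : ℝ :=
  (sS n)⁻¹ * ∫ θ : sph n, rd ψ r θ ∂(sig n)

variable {n : ℕ} {ψ : EuclideanSpace ℝ (Fin n) → ℝ}

lemma rd_cont (hψ : ContDiff ℝ 1 ψ) : Continuous (fun p : ℝ × sph n => rd ψ p.1 p.2) := by
  have := grad_cont ψ hψ
  unfold rd
  fun_prop

lemma rd_contr (hψ : ContDiff ℝ 1 ψ) (r : ℝ) : Continuous (fun θ : sph n => rd ψ r θ) := by
  have := grad_cont ψ hψ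
  unfold rd
  fun_prop

lemma ray_deriv (hψ : ContDiff ℝ 1 ψ) (r : ℝ) (θ : sph n) :
    HasDerivAt (fun r : ℝ => ψ (r • (θ : EuclideanSpace ℝ (Fin n)))) (rd ψ r θ) r := by
  have h1 : HasDerivAt (fun r : ℝ => r • (θ : EuclideanSpace ℝ (Fin n))) (θ : EuclideanSpace ℝ (Fin n)) r := by
    simpa using (hasDerivAt_id r).smul_const (θ : EuclideanSpace ℝ (Fin n))
  have h2 : HasFDerivAt ψ (fderiv ℝ ψ (r • (θ : EuclideanSpace ℝ (Fin n)))) (r • (θ : EuclideanSpace ℝ (Fin n))) :=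
    (hψ.differentiable (by norm_num)).differentiableAt.hasFDerivAt
  refine (h2.comp_hasDerivAt r h1).congr_deriv ?_
  simp [rd, gradient]

lemma smd_cont (hψ : ContDiff ℝ 1 ψ) : Continuous (smd ψ) := by
  unfold smd
  refine continuous_const.mul ?_
  have := continuous_parametric_integral_of_continuous (μ := sig n) (f := fun r θ => rd ψ r θ) (rd_cont hψ) (s := univ) isCompact_univ
  simpa using this

lemma sm_deriv (hψ : ContDiff ℝ 1 ψ) (r : ℝ) : HasDerivAt (sm ψ) (smd ψ r) r := by
  unfold sm smd
  refine HasDerivAt.const_mul _ ?_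
  obtain ⟨M, hM⟩ := ((isCompact_closedBall r 1).prod (isCompact_univ (X := sph n))).exists_bound_of_continuousOn (rd_cont hψ).continuousOn
  have hc := hψ.continuous
  refine (hasDerivAt_integral_of_dominated_loc_of_deriv_le (bound := fun _ => M) (F' := fun r θ => rd ψ r θ) (Metric.ball_mem_nhds r one_pos)
    (.of_forall fun x => ?_) ?_ ?_ (.of_forall fun θ x hx => ?_) (integrable_const M) (.of_forall fun θ x hx => ray_deriv hψ x θ)).2
  · exact (by fun_prop : Continuous fun θ : sph n => ψ (x • (θ : EuclideanSpace ℝ (Fin n)))).aestronglyMeasurable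
  · exact sph_int (by fun_prop)
  · exact ((rd_cont hψ).comp (by fun_prop : Continuous fun θ : sph n => (r, θ))).aestronglyMeasurable
  · exact hM (x, θ) ⟨Metric.ball_subset_closedBall hx, mem_univ _⟩

lemma sm_zero (hn : 1 ≤ n) : sm ψ 0 = ψ 0 := by
  have := sS_pos hn
  simp only [sm, zero_smul, integral_const, smul_eq_mul]
  rw [← sS]; field_simp

lemma sm_int (hn : 1 ≤ n) (r : ℝ) : ∫ θ : sph n, ψ (r • (θ : EuclideanSpace ℝ (Fin n))) ∂(sig n) = sS n * sm ψ r := by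
  have := sS_pos hn
  simp only [sm]; field_simp

lemma smd_int (hn : 1 ≤ n) (r : ℝ) : ∫ θ : sph n, rd ψ r θ ∂(sig n) = sS n * smd ψ r := by
  have := sS_pos hn
  simp only [smd]; field_simp

lemma grad_scale (hψ : ContDiff ℝ 1 ψ) (r c : ℝ) (x : EuclideanSpace ℝ (Fin n)) :
    gradient (fun y => ψ (r • y) - c) x = r • gradient ψ (r • x) := by
    have h2 : HasFDerivAt ψ (fderiv ℝ ψ (r • x)) (r • x) :=
      (hψ.differentiable (by norm_num)).differentiableAt.hasFDerivAt
    have h3 : HasFDerivAt (fun y : EuclideanSpace ℝ (Fin n) => r • y) (r • ContinuousLinearMap.id ℝ _) x :=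
      (hasFDerivAt_id x).const_smul r
    have h4 := (h2.comp x h3).sub_const (c)
    have h5 : fderiv ℝ (fun y => ψ (r • y) - c) x = r • fderiv ℝ ψ (r • x) := by
      rw [show (fun y => ψ (r • y) - c) = (fun y => (ψ ∘ fun y => r • y) y - c) from rfl, h4.fderiv]
      ext v; simp
    simp [gradient, h5]

lemma grad_split (hn : 1 ≤ n) (hψ : ContDiff ℝ 1 ψ) (r : ℝ) (hr : 0 < r) :
    sS n * smd ψ r ^ 2 + ∫ θ : sph n, ((rd ψ r θ - smd ψ r)^2 +
      ((n:ℝ)-1) * (ψ (r • (θ : EuclideanSpace ℝ (Fin n))) - sm ψ r)^2 / r^2) ∂(sig n) ≤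
    ∫ θ : sph n, ‖gradient ψ (r • (θ : EuclideanSpace ℝ (Fin n)))‖^2 ∂(sig n) := by
  have hs := sS_pos hn
  have hc := hψ.continuous
  have hg := grad_cont ψ hψ
  have hrd : Continuous (fun θ : sph n => rd ψ r θ) := rd_contr hψ r
  have hgr := grad_scale hψ r (sm ψ r)
  have hC1 : ContDiff ℝ 1 (fun y => ψ (r • y) - sm ψ r) :=
    (hψ.comp (contDiff_const_smul r)).sub contDiff_const
  have hmz : ∫ θ : sph n, (ψ (r • (θ : EuclideanSpace ℝ (Fin n))) - sm ψ r) ∂(sig n) = 0 := by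
    have i1 : Integrable (fun θ : sph n => ψ (r • (θ : EuclideanSpace ℝ (Fin n)))) (sig n) := sph_int (by fun_prop)
    rw [integral_sub i1 (integrable_const _), sm_int hn, integral_const, ← sS, smul_eq_mul, sub_self]
  have hp := sphere_poinc hn _ hC1 hmz
  have hre : ∀ θ : sph n, ‖gradient (fun y => ψ (r • y) - sm ψ r) (θ : EuclideanSpace ℝ (Fin n))‖^2 -
      (inner ℝ (gradient (fun y => ψ (r • y) - sm ψ r) (θ : EuclideanSpace ℝ (Fin n))) (θ : EuclideanSpace ℝ (Fin n)))^2
      = r^2 * (‖gradient ψ (r • (θ : EuclideanSpace ℝ (Fin n)))‖^2 - rd ψ r θ^2) := by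
    intro θ
    rw [hgr, norm_smul, real_inner_smul_left, mul_pow, mul_pow, Real.norm_eq_abs, sq_abs, mul_sub]
    rfl
  rw [integral_congr_ae (.of_forall hre), integral_const_mul] at hp
  rw [integral_sub (sph_int (by fun_prop)) (sph_int (by fun_prop))] at hp
  have e1 : ∫ θ : sph n, rd ψ r θ^2 ∂(sig n) = sS n * smd ψ r^2 + ∫ θ : sph n, (rd ψ r θ - smd ψ r)^2 ∂(sig n) := by
    have : ∀ θ : sph n, (rd ψ r θ - smd ψ r)^2 = rd ψ r θ^2 - 2 * smd ψ r * rd ψ r θ + smd ψ r^2 := fun θ => by ring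
    simp only [this]
    rw [integral_add (sph_int (by fun_prop)) (integrable_const _), integral_sub (sph_int (by fun_prop)) (sph_int (by fun_prop)),
      integral_const_mul, smd_int hn]
    rw [integral_const, smul_eq_mul, ← sS]
    ring
  rw [integral_add (sph_int (by fun_prop)) (sph_int (by fun_prop)), integral_div, integral_const_mul]
  have : (((n:ℝ)-1) * ∫ θ : sph n, (ψ (r • (θ : EuclideanSpace ℝ (Fin n))) - sm ψ r)^2 ∂(sig n)) / r^2 ≤
     ∫ θ : sph n, ‖gradient ψ (r • (θ : EuclideanSpace ℝ (Fin n)))‖^2 ∂(sig n) - ∫ θ : sph n, rd ψ r θ^2 ∂(sig n) := by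
    rw [div_le_iff₀ (by positivity)]; linarith
  linarith
end
noncomputable def ww (β r : ℝ) : ℝ := 1 + r^2/(2*β)
noncomputable def rho (n : ℕ) (β r : ℝ) : ℝ := r^(n-1) * (ww β r)^(-β-1)
noncomputable def mm (n : ℕ) (β r : ℝ) : ℝ := r^(n-1) * (ww β r)^(-β-2)

lemma ww_pos {β : ℝ} (hβ : 0 < β) (r : ℝ) : 0 < ww β r := by unfold ww; positivity

lemma ww_cont (β : ℝ) : Continuous (ww β) := by unfold ww; fun_prop

lemma ww_rpow_cont {β : ℝ} (hβ : 0 < β) (p : ℝ) : Continuous (fun r => (ww β r)^p) :=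
  (ww_cont β).rpow_const (fun r => Or.inl (ww_pos hβ r).ne')

lemma rho_cont (n : ℕ) {β : ℝ} (hβ : 0 < β) : Continuous (rho n β) := by
  have := ww_rpow_cont hβ (-β-1)
  unfold rho; fun_prop

lemma mm_cont (n : ℕ) {β : ℝ} (hβ : 0 < β) : Continuous (mm n β) := by
  have := ww_rpow_cont hβ (-β-2)
  unfold mm; fun_prop

lemma mm_eq (n : ℕ) {β : ℝ} (hβ : 0 < β) (r : ℝ) : mm n β r = rho n β r / ww β r := by
  unfold mm rho
  rw [show -β-2 = (-β-1)-1 by ring, Real.rpow_sub_one (ww_pos hβ r).ne', mul_div_assoc]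

lemma rho_pos (n : ℕ) {β : ℝ} (hβ : 0 < β) {r : ℝ} (hr : 0 < r) : 0 < rho n β r := by
  have := ww_pos hβ r
  unfold rho; positivity

lemma ww_rpow_deriv {β : ℝ} (hβ : 0 < β) (p r : ℝ) :
    HasDerivAt (fun r => (ww β r)^p) (p * (r/β) * (ww β r)^(p-1)) r := by
  have h1 : HasDerivAt (ww β) (r/β) r := by
    have := ((hasDerivAt_pow 2 r).div_const (2*β)).const_add 1
    refine this.congr_deriv ?_
    field_simp; simp
  refine (h1.rpow_const (Or.inl (ww_pos hβ r).ne')).congr_deriv ?_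
  ring

lemma rho_deriv {n : ℕ} (hn : 1 ≤ n) {β : ℝ} (hβ : 0 < β) {r : ℝ} (hr : 0 < r) :
    HasDerivAt (rho n β) (rho n β r * (((n:ℝ)-1)/r - (β+1)/β * r / ww β r)) r := by
  have h := (hasDerivAt_pow (n-1) r).mul (ww_rpow_deriv hβ (-β-1) r)
  refine h.congr_deriv ?_
  have hw := ww_pos hβ r
  have e : ww β r ^ (-β-1-1) = ww β r ^ (-β-1) / ww β r := Real.rpow_sub_one hw.ne' _
  rw [e, Nat.cast_sub hn, rho]
  generalize ww β r ^ (-β-1) = W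
  clear h
  obtain ⟨m, rfl⟩ : ∃ m, n = m + 1 := ⟨n-1, by omega⟩
  rcases m with _ | m
  · simp; field_simp; ring
  · simp [pow_succ]; field_simp; ring

lemma I1 {n : ℕ} (hn : 1 ≤ n) {β : ℝ} (hβ : 0 < β) (φ φ' : ℝ → ℝ) (hd : ∀ r, HasDerivAt φ (φ' r) r)
    (hc : Continuous φ') (h0 : φ 0 = 0) :
    ∫⁻ r in Ioi 0, ENNReal.ofReal ((β+1)/β * (φ r^2 * mm n β r)) ≤
      ∫⁻ r in Ioi 0, ENNReal.ofReal ((φ' r^2 + ((n:ℝ)-1) * φ r^2 / r^2) * rho n β r) := by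
  have hn1 : (0:ℝ) ≤ (n:ℝ) - 1 := by
    have : (1:ℝ) ≤ n := by exact_mod_cast hn
    linarith
  have cφ : Continuous φ := continuous_iff_continuousAt.mpr fun r => (hd r).continuousAt
  have c1 := mm_cont n hβ
  have c2 := rho_cont n hβ
  have c3 := ww_cont β
  have hne : ∀ r ∈ Ioi (0:ℝ), r ≠ 0 := fun r hr => ne_of_gt hr
  have hwne : ∀ r ∈ Ioi (0:ℝ), ww β r ≠ 0 := fun r _ => (ww_pos hβ r).ne'
  refine oneD_Ioi 0 _ _ (fun r => φ r^2 * rho n β r / r)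
    (fun r => 2 * φ r * φ' r * rho n β r / r + φ r^2 * rho n β r * (((n:ℝ)-2)/r^2 - (β+1)/β/ww β r))
    (by fun_prop) ?_ ?_ ?_ ?_ ?_ ?_ ?_ ?_
  · have : ∀ r ∈ Ioi (0:ℝ), r^2 ≠ 0 := fun r hr => pow_ne_zero _ (hne r hr)
    exact ((hc.pow 2).continuousOn.add ((by fun_prop : Continuous fun r => ((n:ℝ)-1) * φ r^2).continuousOn.div (by fun_prop) this)).mul c2.continuousOn
  · have h2 : ∀ r ∈ Ioi (0:ℝ), r^2 ≠ 0 := fun r hr => pow_ne_zero _ (hne r hr)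
    refine ContinuousOn.add (ContinuousOn.div (by fun_prop) (by fun_prop) hne) (ContinuousOn.mul (by fun_prop) (ContinuousOn.sub ?_ ?_))
    · exact ContinuousOn.div (by fun_prop) (by fun_prop) h2
    · exact ContinuousOn.div (by fun_prop) (by fun_prop) hwne
  · intro r hr
    have := rho_pos n hβ hr
    have hr' : 0 < r := hr
    positivity
  · intro r hr
    have hr' : 0 < r := hr
    have := (((hd r).pow 2).mul (rho_deriv hn hβ hr')).div (hasDerivAt_id r) hr'.ne'
    refine this.congr_deriv ?_
    have hw := ww_pos hβ r
    simp
    field_simp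
    ring
  · intro r hr
    have := rho_pos n hβ hr
    have := ww_pos hβ r
    rw [mm_eq n hβ]
    positivity
  · intro r hr
    have h1 := rho_pos n hβ hr
    have hw := ww_pos hβ r
    have hr' : 0 < r := hr
    rw [mm_eq n hβ]
    have : 0 ≤ rho n β r * (φ' r - φ r / r)^2 := by positivity
    have e : (φ' r^2 + ((n:ℝ)-1) * φ r^2 / r^2) * rho n β r - ((β+1)/β * (φ r^2 * (rho n β r / ww β r)) + (2 * φ r * φ' r * rho n β r / r + φ r^2 * rho n β r * (((n:ℝ)-2)/r^2 - (β+1)/β/ww β r)))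
      = rho n β r * (φ' r - φ r / r)^2 := by
      field_simp
      ring
    linarith
  · intro r hr
    have h1 := rho_pos n hβ hr
    have hr' : 0 < r := hr
    positivity
  · have s := (hasDerivAt_iff_tendsto_slope.mp (hd 0)).mono_left (nhdsWithin_mono 0 (fun x (hx : x ∈ Ioi (0:ℝ)) => ne_of_gt hx))
    have t1 : Tendsto (fun r => φ r * rho n β r) (𝓝[>] 0) (𝓝 (φ 0 * rho n β 0)) := ((cφ.mul c2).tendsto 0).mono_left nhdsWithin_le_nhds
    have t2 := t1.mul s
    rw [h0, zero_mul, zero_mul] at t2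
    refine t2.congr' ?_
    filter_upwards [self_mem_nhdsWithin] with r hr
    rw [slope_def_field, h0]
    have : r ≠ 0 := hne r hr
    field_simp
    ring

lemma I2_slope {f f' : ℝ → ℝ} (hd : ∀ r, HasDerivAt f (f' r) r) (r0 : ℝ) (hr0 : 0 < r0) (ρ : ℝ → ℝ) (hρ : Continuous ρ) :
    Tendsto (fun r => (f r - f r0)^2 * ρ r * (2*r/(r^2-r0^2))) (𝓝[≠] r0) (𝓝 0) := by
  have cf : Continuous f := continuous_iff_continuousAt.mpr fun r => (hd r).continuousAt
  have s := hasDerivAt_iff_tendsto_slope.mp (hd r0)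
  have t1 : Tendsto (fun r => (f r - f r0) * ρ r * (2*r/(r+r0))) (𝓝[≠] r0) (𝓝 ((f r0 - f r0) * ρ r0 * (2*r0/(r0+r0)))) := by
    refine Tendsto.mono_left ?_ nhdsWithin_le_nhds
    refine (((cf.sub continuous_const).mul hρ).tendsto r0).mul (Tendsto.div ?_ ?_ (by positivity))
    · exact (by fun_prop : Continuous fun r : ℝ => 2 * r).tendsto r0
    · exact (by fun_prop : Continuous fun r : ℝ => r + r0).tendsto r0
  have t2 := t1.mul s
  rw [sub_self, zero_mul, zero_mul, zero_mul] at t2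
  refine t2.congr' ?_
  have hpos : ∀ᶠ r in 𝓝[≠] r0, 0 < r := nhdsWithin_le_nhds (lt_mem_nhds hr0)
  filter_upwards [self_mem_nhdsWithin, hpos] with r hr hrp
  rw [slope_def_field]
  have : r - r0 ≠ 0 := sub_ne_zero.mpr hr
  have h2 : r + r0 ≠ 0 := by positivity
  rw [show r^2 - r0^2 = (r-r0)*(r+r0) by ring]
  field_simp

lemma I2 {n : ℕ} (hn : 1 ≤ n) {β : ℝ} (hβ : (n:ℝ) < β) (f f' : ℝ → ℝ) (hd : ∀ r, HasDerivAt f (f' r) r)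
    (hc : Continuous f') (r0 : ℝ) (hr0 : 0 < r0) (hr2 : (2*β+2-n) * r0^2 = 2*n*β) :
    ∫⁻ r in Ioi 0, ENNReal.ofReal ((2*β+2-n)/β * ((f r - f r0)^2 * mm n β r)) ≤
      ∫⁻ r in Ioi 0, ENNReal.ofReal (f' r^2 * rho n β r) := by
  have hn1 : (1:ℝ) ≤ (n:ℝ) := by exact_mod_cast hn
  have hb : 0 < β := by linarith
  have hl : 0 < 2*β+2-n := by linarith
  have cf : Continuous f := continuous_iff_continuousAt.mpr fun r => (hd r).continuousAt
  have c1 := mm_cont n hb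
  have c2 := rho_cont n hb
  have c3 := ww_cont β
  set A : ℝ → ℝ := fun r => (2*β+2-n)/β * ((f r - f r0)^2 * mm n β r) with hA
  set B : ℝ → ℝ := fun r => f' r^2 * rho n β r with hB
  set H : ℝ → ℝ := fun r => (f r - f r0)^2 * rho n β r * (2*r/(r^2-r0^2)) with hH
  set H' : ℝ → ℝ := fun r => 2 * (f r - f r0) * f' r * rho n β r * (2*r/(r^2-r0^2))
    + (f r - f r0)^2 * rho n β r * ((((n:ℝ)-1)/r - (β+1)/β * r / ww β r) * (2*r/(r^2-r0^2)) + (2/(r^2-r0^2) - (2*r/(r^2-r0^2))^2)) with hH'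
  have cA : Continuous A := by fun_prop
  have cB : Continuous B := by fun_prop
  have hq : ∀ r, 0 < r → r ≠ r0 → r^2 - r0^2 ≠ 0 := by
    intro r hr hne h
    have : (r - r0) * (r + r0) = 0 := by linarith
    rcases mul_eq_zero.mp this with h | h
    · exact hne (by linarith)
    · linarith
  have cH' : ContinuousOn H' {r | 0 < r ∧ r ≠ r0} := by
    have q : ContinuousOn (fun r : ℝ => 2*r/(r^2-r0^2)) {r | 0 < r ∧ r ≠ r0} :=
      ContinuousOn.div (by fun_prop) (by fun_prop) (fun r hr => hq r hr.1 hr.2)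
    have q2 : ContinuousOn (fun r : ℝ => 2/(r^2-r0^2)) {r | 0 < r ∧ r ≠ r0} :=
      ContinuousOn.div (by fun_prop) (by fun_prop) (fun r hr => hq r hr.1 hr.2)
    have q3 : ContinuousOn (fun r : ℝ => ((n:ℝ)-1)/r) {r | 0 < r ∧ r ≠ r0} :=
      ContinuousOn.div (by fun_prop) (by fun_prop) (fun r hr => hr.1.ne')
    have q4 : ContinuousOn (fun r : ℝ => (β+1)/β * r / ww β r) {r | 0 < r ∧ r ≠ r0} :=
      ContinuousOn.div (by fun_prop) (by fun_prop) (fun r hr => (ww_pos hb r).ne')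
    refine ContinuousOn.add (ContinuousOn.mul (by fun_prop) q) (ContinuousOn.mul (by fun_prop) ?_)
    exact ((q3.sub q4).mul q).add (q2.sub (q.pow 2))
  have dH : ∀ r, 0 < r → r ≠ r0 → HasDerivAt H (H' r) r := by
    intro r hr hne
    have hq' := hq r hr hne
    have d1 := ((((hd r).sub_const (f r0)).pow 2).mul (rho_deriv hn hb hr)).mul
      (((hasDerivAt_id r).const_mul 2).div (((hasDerivAt_pow 2 r)).sub_const (r0^2)) hq')
    refine d1.congr_deriv ?_
    have hw := (ww_pos hb r).ne'
    simp only [hH', id]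
    simp
    field_simp
    ring
  have A0 : ∀ r, 0 < r → 0 ≤ A r := by
    intro r hr
    have := rho_pos n hb hr
    have := ww_pos hb r
    simp only [hA]
    rw [mm_eq n hb]
    positivity
  have B0 : ∀ r, 0 < r → 0 ≤ B r := by
    intro r hr
    have := rho_pos n hb hr
    simp only [hB]
    positivity
  have le : ∀ r, 0 < r → r ≠ r0 → A r + H' r ≤ B r := by
    intro r hr hne
    have hq' := hq r hr hne
    have hρ := rho_pos n hb hr
    have hw := ww_pos hb r
    have : 0 ≤ rho n β r * (f' r - (f r - f r0) * (2*r/(r^2-r0^2)))^2 := by positivity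
    have key : (2*β+2-n)/β / ww β r + (((n:ℝ)-1)/r - (β+1)/β * r / ww β r) * (2*r/(r^2-r0^2)) + 2/(r^2-r0^2) = 0 := by
      have hw' := hw.ne'
      have ew : ww β r * (2*β) = 2*β + r^2 := by unfold ww; field_simp
      field_simp
      nlinarith [ew, hr2]
    have e : B r - (A r + H' r) = rho n β r * (f' r - (f r - f r0) * (2*r/(r^2-r0^2)))^2
      - (f r - f r0)^2 * rho n β r * ((2*β+2-n)/β / ww β r + (((n:ℝ)-1)/r - (β+1)/β * r / ww β r) * (2*r/(r^2-r0^2)) + 2/(r^2-r0^2)) := by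
      simp only [hA, hB, hH', mm_eq n hb]
      ring
    rw [key, mul_zero] at e
    linarith
  have lim := I2_slope hd r0 hr0 _ c2
  have p1 : ∫⁻ r in Ioo 0 r0, ENNReal.ofReal (A r) ≤ ∫⁻ r in Ioo 0 r0, ENNReal.ofReal (B r) := by
    refine oneD_Ioo 0 r0 hr0 A B H H' cA.continuousOn cB.continuousOn (cH'.mono fun r hr => ⟨hr.1, hr.2.ne⟩)
      (fun r hr => B0 r hr.1) (fun r hr => dH r hr.1 hr.2.ne) (fun r hr => A0 r hr.1) (fun r hr => le r hr.1 hr.2.ne) ?_ ?_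
    · have : ContinuousAt H 0 := by
        refine ContinuousAt.mul (by fun_prop) (ContinuousAt.div (by fun_prop) (by fun_prop) ?_)
        have : 0 < r0^2 := by positivity
        intro h; norm_num at h; linarith
      have h := this.tendsto.mono_left (nhdsWithin_le_nhds (s := Ioi 0))
      simpa [hH] using h
    · exact lim.mono_left (nhdsWithin_mono _ fun r hr => ne_of_lt hr)
  have p2 : ∫⁻ r in Ioi r0, ENNReal.ofReal (A r) ≤ ∫⁻ r in Ioi r0, ENNReal.ofReal (B r) := by
    have hp : ∀ r ∈ Ioi r0, 0 < r := fun r hr => hr0.trans hr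
    refine oneD_Ioi r0 A B H H' cA.continuousOn cB.continuousOn (cH'.mono fun r hr => ⟨hp r hr, ne_of_gt hr⟩)
      (fun r hr => B0 r (hp r hr)) (fun r hr => dH r (hp r hr) (ne_of_gt hr)) (fun r hr => A0 r (hp r hr))
      (fun r hr => le r (hp r hr) (ne_of_gt hr)) (fun r hr => ?_) ?_
    · have h1 := hp r hr
      have := rho_pos n hb h1
      have h2 : 0 < r^2 - r0^2 := by
        have : r0 < r := hr
        nlinarith
      simp only [hH]
      positivity
    · exact lim.mono_left (nhdsWithin_mono _ fun r hr => ne_of_gt hr)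
  have split : ∀ g : ℝ → ENNReal, ∫⁻ r in Ioi 0, g r = (∫⁻ r in Ioo 0 r0, g r) + ∫⁻ r in Ioi r0, g r := by
    intro g
    rw [← Ioc_union_Ioi_eq_Ioi hr0.le, lintegral_union measurableSet_Ioi (Ioc_disjoint_Ioi le_rfl),
      setLIntegral_congr Ioo_ae_eq_Ioc]
  rw [split, split]
  exact add_le_add p1 p2

lemma final_alg {n β V F0 F1 c z z1 z2 : ℝ} (hn : 0 < n) (hβ : n < β) (hz2 : 0 < z2)
    (e1 : (2*β+2-n) * z1 = 2*(β+1)*z2) (e2 : (2*β-n)*z = 2*β*z1)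
    (hV : ∀ x y, 0 ≤ V - 2*x*F0 - 2*y*F1 + x^2*z2 + 2*x*y*z1 + y^2*z) :
    0 ≤ (2*β+2-n)/β * (V - 2*c*F0 + c^2*z2) - (β+1)/β * V + (β-n+1)/((β-n)*z) * F1^2 := by
  have hb : 0 < β := hn.trans hβ
  obtain ⟨m, rfl⟩ : ∃ m, β = n + m := ⟨β - n, by ring⟩
  have hm : 0 < m := by linarith
  have h1 : 0 < n + 2 * m + 2 := by positivity
  have h2 : 0 < n + 2 * m := by positivity
  have ez1 : z1 = 2*(n+m+1)/(n+2*m+2)*z2 := by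
    field_simp; linarith
  have ez : z = 2*(n+m)/(n+2*m) * z1 := by
    field_simp; linarith
  subst ez1
  subst ez
  set g := F0 / z2 with hg
  set τ := (F1 - 2*(n+m+1)/(n+2*m+2) * F0)/z2 with hτ
  have hF0 : F0 = g * z2 := by rw [hg]; field_simp
  have hF1 : F1 = (τ + 2*(n+m+1)/(n+2*m+2) * g) * z2 := by rw [hτ, hg]; field_simp; ring
  clear_value g τ
  subst hF0
  subst hF1
  have hy := hV (g - τ * (n+2*m)*(n+2*m+2)/(2*n)) (τ * (n+2*m)*(n+2*m+2)/(2*n) * ((n+2*m+2)/(2*(n+m+1))))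
  have hc : V - 2*c*(g*z2) + c^2*z2 ≥ V - g^2*z2 := by nlinarith [mul_nonneg hz2.le (sq_nonneg (c-g))]
  have k1 : (2*(n+m)+2-n)/(n+m) * (V - 2*c*(g*z2) + c^2*z2) ≥ (2*(n+m)+2-n)/(n+m) * (V - g^2*z2) := by
    have : 0 < (2*(n+m)+2-n)/(n+m) := by apply div_pos <;> linarith
    exact mul_le_mul_of_nonneg_left hc this.le
  have k2 : 0 ≤ (m+1)/(n+m) * (V - 2*(g - τ * (n+2*m)*(n+2*m+2)/(2*n))*(g*z2) - 2*(τ * (n+2*m)*(n+2*m+2)/(2*n) * ((n+2*m+2)/(2*(n+m+1))))*((τ + 2*(n+m+1)/(n+2*m+2) * g) * z2)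
      + (g - τ * (n+2*m)*(n+2*m+2)/(2*n))^2*z2 + 2*(g - τ * (n+2*m)*(n+2*m+2)/(2*n))*(τ * (n+2*m)*(n+2*m+2)/(2*n) * ((n+2*m+2)/(2*(n+m+1))))*(2*(n+m+1)/(n+2*m+2)*z2)
      + (τ * (n+2*m)*(n+2*m+2)/(2*n) * ((n+2*m+2)/(2*(n+m+1))))^2*(2*(n+m)/(n+2*m) * (2*(n+m+1)/(n+2*m+2)*z2))) :=
    mul_nonneg (by positivity) hy
  have k3 : 0 ≤ z2 * ((n+m+1)*n/((n+m)*m*(n+2*m+2)) * (g + (m+1)*(n+2*m)*(n+2*m+2)/(2*n*(n+m+1)) * τ)^2) := by positivity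
  have key : (2*(n+m)+2-n)/(n+m) * (V - g^2*z2) - (n+m+1)/(n+m) * V
      + (n+m-n+1)/((n+m-n)*(2*(n+m)/(n+2*m) * (2*(n+m+1)/(n+2*m+2)*z2))) * ((τ + 2*(n+m+1)/(n+2*m+2) * g) * z2)^2 =
      (m+1)/(n+m) * (V - 2*(g - τ * (n+2*m)*(n+2*m+2)/(2*n))*(g*z2) - 2*(τ * (n+2*m)*(n+2*m+2)/(2*n) * ((n+2*m+2)/(2*(n+m+1))))*((τ + 2*(n+m+1)/(n+2*m+2) * g) * z2)
      + (g - τ * (n+2*m)*(n+2*m+2)/(2*n))^2*z2 + 2*(g - τ * (n+2*m)*(n+2*m+2)/(2*n))*(τ * (n+2*m)*(n+2*m+2)/(2*n) * ((n+2*m+2)/(2*(n+m+1))))*(2*(n+m+1)/(n+2*m+2)*z2)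
      + (τ * (n+2*m)*(n+2*m+2)/(2*n) * ((n+2*m+2)/(2*(n+m+1))))^2*(2*(n+m)/(n+2*m) * (2*(n+m+1)/(n+2*m+2)*z2)))
      + z2 * ((n+m+1)*n/((n+m)*m*(n+2*m+2)) * (g + (m+1)*(n+2*m)*(n+2*m+2)/(2*n*(n+m+1)) * τ)^2) := by
    rw [show n + m - n = m by ring]
    field_simp
    ring
  linarith

lemma wE_int {n : ℕ} {β p : ℝ} (hβ : 0 < β) (hp : (n:ℝ) < 2*p) :
    Integrable (fun x : EuclideanSpace ℝ (Fin n) => (ww β ‖x‖)^(-p)) := by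
  have h := integrable_rpow_neg_one_add_norm_sq (E := EuclideanSpace ℝ (Fin n)) (μ := volume) (r := 2*p) (by simpa using hp)
  have hp0 : 0 < p := by
    have : (0:ℝ) ≤ n := by positivity
    linarith
  refine (h.const_mul ((1+2*β)^p)).mono' ?_ (.of_forall fun x => ?_)
  · exact ((ww_rpow_cont hβ (-p)).comp continuous_norm).aestronglyMeasurable
  · have hw := ww_pos hβ ‖x‖
    rw [Real.norm_of_nonneg (by positivity), show -(2*p)/2 = -p by ring]
    have h1 : (1 + ‖x‖^2) / (1+2*β) ≤ ww β ‖x‖ := by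
      unfold ww
      rw [div_le_iff₀ (by positivity)]
      have e : (1 + ‖x‖^2/(2*β)) * (1 + 2*β) = 1 + ‖x‖^2 + 2*β + ‖x‖^2/(2*β) := by field_simp; ring
      rw [e]
      have : 0 ≤ ‖x‖^2/(2*β) := by positivity
      linarith
    calc (ww β ‖x‖)^(-p) ≤ ((1 + ‖x‖^2) / (1+2*β))^(-p) :=
          Real.rpow_le_rpow_of_nonpos (by positivity) h1 (by linarith)
      _ = _ := by
          rw [Real.div_rpow (by positivity) (by positivity), Real.rpow_neg (by positivity : (0:ℝ) ≤ 1 + 2*β)]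
          field_simp

lemma w_int {n : ℕ} (hn : 1 ≤ n) {β p : ℝ} (hβ : 0 < β) (hp : (n:ℝ) < 2*p) :
    IntegrableOn (fun r : ℝ => r^(n-1) * (ww β r)^(-p)) (Ioi 0) := by
  have : Nonempty (Fin n) := ⟨⟨0, hn⟩⟩
  have h := wE_int (n := n) hβ hp
  rw [integrable_fun_norm_addHaar (μ := volume) (f := fun r => (ww β r)^(-p)), finrank_euclideanSpace_fin] at h
  simpa using h

lemma w_tend {n : ℕ} {β p : ℝ} (hβ : 0 < β) (hp : (n:ℝ) < 2*p) :
    Tendsto (fun r : ℝ => r^n * (ww β r)^(-p)) atTop (𝓝 0) := by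
  have hw : Tendsto (ww β) atTop atTop := by
    unfold ww
    exact tendsto_atTop_add_const_left _ _ ((tendsto_pow_atTop (by norm_num)).atTop_div_const (by positivity))
  have h1 : Tendsto (fun r => (2*β)^((n:ℝ)/2) * (ww β r)^(-(p - (n:ℝ)/2))) atTop (𝓝 ((2*β)^((n:ℝ)/2) * 0)) :=
    ((tendsto_rpow_neg_atTop (by linarith)).comp hw).const_mul _
  rw [mul_zero] at h1
  refine squeeze_zero' ?_ ?_ h1
  · filter_upwards [eventually_ge_atTop 0] with r hr
    have := ww_pos hβ r
    positivity
  · filter_upwards [eventually_ge_atTop 0] with r hr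
    have hw := ww_pos hβ r
    have e : r^n = (r^2)^((n:ℝ)/2) := by
      rw [← Real.rpow_natCast r 2, ← Real.rpow_mul hr, ← Real.rpow_natCast r n]
      congr 1; push_cast; ring
    have h2 : r^2 ≤ 2*β * ww β r := by
      unfold ww; field_simp; linarith
    calc r^n * (ww β r)^(-p) ≤ (2*β * ww β r)^((n:ℝ)/2) * (ww β r)^(-p) := by
          rw [e]; gcongr
      _ = _ := by
          rw [Real.mul_rpow (by positivity) hw.le, mul_assoc, ← Real.rpow_add hw]
          congr 2; ring

lemma mom_rel {n : ℕ} (hn : 1 ≤ n) {β p : ℝ} (hβ : 0 < β) (hp : (n:ℝ) < 2*p) :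
    (2*p - n) * ∫ r in Ioi (0:ℝ), r^(n-1) * (ww β r)^(-p) =
      2*p * ∫ r in Ioi (0:ℝ), r^(n-1) * (ww β r)^(-p-1) := by
  have i1 := w_int hn hβ hp
  have i2 := w_int hn hβ (p := p+1) (by linarith)
  rw [show -(p+1) = -p-1 by ring] at i2
  have h := integral_Ioi_of_hasDerivAt_of_tendsto' (a := 0) (f := fun r : ℝ => r^n * (ww β r)^(-p))
    (f' := fun r => ((n:ℝ) - 2*p) * (r^(n-1) * (ww β r)^(-p)) + 2*p * (r^(n-1) * (ww β r)^(-p-1))) (m := 0)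
    (fun r _ => ?_) ((i1.const_mul _).add (i2.const_mul _)) (w_tend hβ hp)
  · rw [integral_add (i1.const_mul _) (i2.const_mul _), integral_const_mul, integral_const_mul] at h
    have : (0:ℝ)^n = 0 := by simp; omega
    rw [this] at h
    linarith
  · have d := (hasDerivAt_pow n r).mul (ww_rpow_deriv hβ (-p) r)
    refine d.congr_deriv ?_
    have hw := (ww_pos hβ r)
    have e : ww β r ^ (-p) = ww β r ^ (-p-1) * ww β r := by
      rw [Real.rpow_sub_one hw.ne']; field_simp
    rw [e]
    have e2 : r^n = r^(n-1) * r := by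
      rw [← pow_succ]; congr 1; omega
    rw [e2]
    generalize ww β r ^ (-p-1) = W
    unfold ww
    field_simp
    ring
lemma nrm_sph {n : ℕ} {r : ℝ} (hr : 0 < r) (θ : sph n) : ‖r • (θ : EuclideanSpace ℝ (Fin n))‖ = r := by
  rw [norm_smul, norm_eq_of_mem_sphere θ, Real.norm_of_nonneg hr.le, mul_one]

lemma polar_nn {n : ℕ} (hn : 1 ≤ n) {β : ℝ} (hβ : 0 < β) (p : ℝ) (u : EuclideanSpace ℝ (Fin n) → ℝ)
    (hu : Continuous u) (h0 : ∀ x, 0 ≤ u x) :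
    ∫⁻ x, ENNReal.ofReal (u x * (ww β ‖x‖)^p) = ∫⁻ r in Ioi (0:ℝ), ENNReal.ofReal
      (r^(n-1) * (ww β r)^p * ∫ θ : sph n, u (r • (θ : EuclideanSpace ℝ (Fin n))) ∂(sig n)) := by
  have hw : Continuous (fun x : EuclideanSpace ℝ (Fin n) => (ww β ‖x‖)^p) :=
    (ww_rpow_cont hβ p).comp continuous_norm
  have hm : Measurable (fun x => ENNReal.ofReal (u x * (ww β ‖x‖)^p)) := (hu.mul hw).measurable.ennreal_ofReal
  rw [polar_lintegral n hn _ hm]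
  refine setLIntegral_congr_fun measurableSet_Ioi fun r hr => ?_
  have hr' : 0 < r := hr
  have hwr := ww_pos hβ r
  have hc : Continuous (fun θ : sph n => u (r • (θ : EuclideanSpace ℝ (Fin n)))) := by fun_prop
  simp only [nrm_sph hr']
  rw [mul_assoc, ENNReal.ofReal_mul (by positivity), ← integral_const_mul,
    ofReal_integral_eq_lintegral_ofReal ((sph_int hc).const_mul _) (.of_forall fun θ => mul_nonneg (by positivity) (h0 _))]
  simp only [mul_comm]

lemma polar_w {n : ℕ} (hn : 1 ≤ n) {β : ℝ} (p : ℝ) (u : EuclideanSpace ℝ (Fin n) → ℝ)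
    (hi : Integrable (fun x => u x * (ww β ‖x‖)^p)) :
    ∫ x, u x * (ww β ‖x‖)^p = ∫ r in Ioi (0:ℝ),
      r^(n-1) * (ww β r)^p * ∫ θ : sph n, u (r • (θ : EuclideanSpace ℝ (Fin n))) ∂(sig n) := by
  rw [polar_integral n hn _ hi]
  refine setIntegral_congr_fun measurableSet_Ioi fun r hr => ?_
  have hr' : 0 < r := hr
  simp only [nrm_sph hr']
  rw [integral_mul_const]
  ring

lemma sq_sub {n : ℕ} (hn : 1 ≤ n) {ψ : EuclideanSpace ℝ (Fin n) → ℝ} (hψ : Continuous ψ) (r : ℝ) :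
    ∫ θ : sph n, (ψ (r • (θ : EuclideanSpace ℝ (Fin n))) - sm ψ r)^2 ∂(sig n) =
      (∫ θ : sph n, (ψ (r • (θ : EuclideanSpace ℝ (Fin n))))^2 ∂(sig n)) - sS n * sm ψ r ^ 2 := by
  have hc : Continuous (fun θ : sph n => ψ (r • (θ : EuclideanSpace ℝ (Fin n)))) := by fun_prop
  have j1 : Integrable (fun θ : sph n => (ψ (r • (θ : EuclideanSpace ℝ (Fin n))))^2) (sig n) := sph_int (hc.pow 2)
  have j2 : Integrable (fun θ : sph n => 2 * sm ψ r * ψ (r • (θ : EuclideanSpace ℝ (Fin n)))) (sig n) := sph_int (hc.const_mul _)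
  have j3 : Integrable (fun θ : sph n => (ψ (r • (θ : EuclideanSpace ℝ (Fin n))))^2 - 2 * sm ψ r * ψ (r • (θ : EuclideanSpace ℝ (Fin n)))) (sig n) := j1.sub j2
  have j4 : Integrable (fun θ : sph n => sm ψ r ^ 2) (sig n) := integrable_const _
  have e : ∀ θ : sph n, (ψ (r • (θ : EuclideanSpace ℝ (Fin n))) - sm ψ r)^2 =
    ((ψ (r • (θ : EuclideanSpace ℝ (Fin n))))^2 - 2 * sm ψ r * ψ (r • (θ : EuclideanSpace ℝ (Fin n)))) + sm ψ r ^ 2 := fun θ => by ring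
  simp only [e]
  rw [integral_add j3 j4, integral_sub j1 j2, integral_const_mul, sm_int hn, integral_const, smul_eq_mul, ← sS]
  ring

noncomputable def KK {n : ℕ} (ψ : EuclideanSpace ℝ (Fin n) → ℝ) (r : ℝ) (θ : sph n) : ℝ :=
  (rd ψ r θ - smd ψ r)^2 + ((n:ℝ)-1) * (ψ (r • (θ : EuclideanSpace ℝ (Fin n))) - sm ψ r)^2 / r^2

lemma sm_cont {n : ℕ} {ψ : EuclideanSpace ℝ (Fin n) → ℝ} (hψ : ContDiff ℝ 1 ψ) : Continuous (sm ψ) :=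
  continuous_iff_continuousAt.2 fun r => (sm_deriv hψ r).continuousAt

lemma KK_meas {n : ℕ} {ψ : EuclideanSpace ℝ (Fin n) → ℝ} (hψ : ContDiff ℝ 1 ψ) :
    Measurable (fun p : ℝ × sph n => KK ψ p.1 p.2) := by
  have a1 : Measurable (fun p : ℝ × sph n => rd ψ p.1 p.2) := (rd_cont hψ).measurable
  have a2 : Measurable (fun p : ℝ × sph n => smd ψ p.1) := (smd_cont hψ).measurable.comp measurable_fst
  have a3 : Measurable (fun p : ℝ × sph n => sm ψ p.1) := (sm_cont hψ).measurable.comp measurable_fst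
  have hc := hψ.continuous
  have a4 : Continuous (fun p : ℝ × sph n => ψ (p.1 • (p.2 : EuclideanSpace ℝ (Fin n)))) := by fun_prop
  have a5 := a4.measurable
  unfold KK
  exact ((a1.sub a2).pow_const 2).add (((a5.sub a3).pow_const 2).const_mul _ |>.div (measurable_fst.pow_const 2))

lemma KK_cont {n : ℕ} {ψ : EuclideanSpace ℝ (Fin n) → ℝ} (hψ : ContDiff ℝ 1 ψ) (r : ℝ) :
    Continuous (fun θ : sph n => KK ψ r θ) := by
  have a1 := rd_contr hψ r
  have hc := hψ.continuous
  unfold KK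
  fun_prop

lemma KK_nonneg {n : ℕ} (hn : 1 ≤ n) (ψ : EuclideanSpace ℝ (Fin n) → ℝ) (r : ℝ) (θ : sph n) : 0 ≤ KK ψ r θ := by
  have : (0:ℝ) ≤ (n:ℝ) - 1 := by
    have : (1:ℝ) ≤ n := by exact_mod_cast hn
    linarith
  unfold KK
  positivity

lemma rd_contl {n : ℕ} {ψ : EuclideanSpace ℝ (Fin n) → ℝ} (hψ : ContDiff ℝ 1 ψ) (θ : sph n) :
    Continuous (fun r : ℝ => rd ψ r θ) := by
  have := grad_cont ψ hψ
  unfold rd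
  fun_prop

lemma ang_part {n : ℕ} (hn : 1 ≤ n) {β : ℝ} (hβ : 0 < β) {ψ : EuclideanSpace ℝ (Fin n) → ℝ} (hψ : ContDiff ℝ 1 ψ) :
    ∫⁻ r in Ioi (0:ℝ), ENNReal.ofReal ((β+1)/β * (mm n β r *
      ((∫ θ : sph n, (ψ (r • (θ : EuclideanSpace ℝ (Fin n))))^2 ∂(sig n)) - sS n * sm ψ r ^ 2))) ≤
    ∫⁻ r in Ioi (0:ℝ), ENNReal.ofReal (rho n β r * ∫ θ : sph n, KK ψ r θ ∂(sig n)) := by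
  have hc := hψ.continuous
  have e1 : ∫⁻ r in Ioi (0:ℝ), ENNReal.ofReal ((β+1)/β * (mm n β r *
      ((∫ θ : sph n, (ψ (r • (θ : EuclideanSpace ℝ (Fin n))))^2 ∂(sig n)) - sS n * sm ψ r ^ 2))) =
      ∫⁻ r in Ioi (0:ℝ), ∫⁻ θ : sph n, ENNReal.ofReal ((β+1)/β *
        ((ψ (r • (θ : EuclideanSpace ℝ (Fin n))) - sm ψ r)^2 * mm n β r)) ∂(sig n) := by
    refine setLIntegral_congr_fun measurableSet_Ioi fun r hr => ?_
    have hr' : 0 < r := hr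
    have hm : 0 < mm n β r := by
      rw [mm_eq n hβ]; exact div_pos (rho_pos n hβ hr') (ww_pos hβ r)
    have hcc : Continuous (fun θ : sph n => (β+1)/β *
        ((ψ (r • (θ : EuclideanSpace ℝ (Fin n))) - sm ψ r)^2 * mm n β r)) := by fun_prop
    rw [← sq_sub hn hc, ← ofReal_integral_eq_lintegral_ofReal (sph_int hcc) (.of_forall fun θ => by positivity),
      integral_const_mul, integral_mul_const]
    congr 1; ring
  have e2 : ∫⁻ r in Ioi (0:ℝ), ENNReal.ofReal (rho n β r * ∫ θ : sph n, KK ψ r θ ∂(sig n)) =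
      ∫⁻ r in Ioi (0:ℝ), ∫⁻ θ : sph n, ENNReal.ofReal (KK ψ r θ * rho n β r) ∂(sig n) := by
    refine setLIntegral_congr_fun measurableSet_Ioi fun r hr => ?_
    have hm := rho_pos n hβ hr
    have hkc : Continuous (fun θ : sph n => KK ψ r θ * rho n β r) := (KK_cont hψ r).mul continuous_const
    rw [← ofReal_integral_eq_lintegral_ofReal (sph_int hkc)
      (.of_forall fun θ => mul_nonneg (KK_nonneg hn ψ r θ) hm.le), integral_mul_const, mul_comm]
  have m1 : Measurable (fun p : ℝ × sph n => ENNReal.ofReal ((β+1)/β *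
        ((ψ (p.1 • (p.2 : EuclideanSpace ℝ (Fin n))) - sm ψ p.1)^2 * mm n β p.1))) := by
    have b1 := sm_cont hψ
    have b2 := mm_cont n hβ
    have : Continuous (fun p : ℝ × sph n => ((β+1)/β *
        ((ψ (p.1 • (p.2 : EuclideanSpace ℝ (Fin n))) - sm ψ p.1)^2 * mm n β p.1))) := by fun_prop
    exact this.measurable.ennreal_ofReal
  have m2 : Measurable (fun p : ℝ × sph n => ENNReal.ofReal (KK ψ p.1 p.2 * rho n β p.1)) :=
    ((KK_meas hψ).mul ((rho_cont n hβ).measurable.comp measurable_fst)).ennreal_ofReal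
  rw [e1, e2, lintegral_lintegral_swap m1.aemeasurable, lintegral_lintegral_swap (f := fun r θ => ENNReal.ofReal (KK ψ r θ * rho n β r)) m2.aemeasurable]
  refine lintegral_mono fun θ => ?_
  refine I1 hn hβ (fun r => ψ (r • (θ : EuclideanSpace ℝ (Fin n))) - sm ψ r) (fun r => rd ψ r θ - smd ψ r)
    (fun r => (ray_deriv hψ r θ).sub (sm_deriv hψ r)) ?_ ?_
  · exact (rd_contl hψ θ).sub (smd_cont hψ)
  · simp [sm_zero hn]

lemma energy {n : ℕ} (hn : 1 ≤ n) {β : ℝ} (hβ : 0 < β) {ψ : EuclideanSpace ℝ (Fin n) → ℝ} (hψ : ContDiff ℝ 1 ψ) :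
    (∫⁻ r in Ioi (0:ℝ), ENNReal.ofReal (sS n * (smd ψ r ^ 2 * rho n β r))) +
    (∫⁻ r in Ioi (0:ℝ), ENNReal.ofReal ((β+1)/β * (mm n β r *
      ((∫ θ : sph n, (ψ (r • (θ : EuclideanSpace ℝ (Fin n))))^2 ∂(sig n)) - sS n * sm ψ r ^ 2)))) ≤
    ∫⁻ r in Ioi (0:ℝ), ENNReal.ofReal (rho n β r * ∫ θ : sph n, ‖gradient ψ (r • (θ : EuclideanSpace ℝ (Fin n)))‖^2 ∂(sig n)) := by
  refine (add_le_add_right (ang_part hn hβ hψ) _).trans ?_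
  have mc : Continuous (fun r => sS n * (smd ψ r ^ 2 * rho n β r)) :=
    continuous_const.mul (((smd_cont hψ).pow 2).mul (rho_cont n hβ))
  rw [← lintegral_add_left mc.measurable.ennreal_ofReal]
  refine setLIntegral_mono' measurableSet_Ioi fun r hr => ?_
  have hm := rho_pos n hβ hr
  have hs := sS_pos hn
  rw [← ENNReal.ofReal_add (by positivity) (mul_nonneg hm.le (integral_nonneg fun θ => KK_nonneg hn ψ r θ))]
  refine ENNReal.ofReal_le_ofReal ?_
  have := mul_le_mul_of_nonneg_left (grad_split hn hψ r hr) hm.le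
  simp only [KK]
  linarith

noncomputable def zz (n : ℕ) (β r : ℝ) : ℝ := r^(n-1) * (ww β r)^(-β)

lemma zz_eq (n : ℕ) {β : ℝ} (hβ : 0 < β) (r : ℝ) : zz n β r = mm n β r * ww β r ^ 2 := by
  have hw := ww_pos hβ r
  unfold zz mm
  rw [mul_assoc, ← Real.rpow_natCast (ww β r) 2, ← Real.rpow_add hw]
  congr 2; push_cast; ring

lemma rho_eq (n : ℕ) {β : ℝ} (hβ : 0 < β) (r : ℝ) : rho n β r = mm n β r * ww β r := by
  have hw := ww_pos hβ r
  rw [mm_eq n hβ]; field_simp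

lemma mm_pos (n : ℕ) {β : ℝ} (hβ : 0 < β) {r : ℝ} (hr : 0 < r) : 0 < mm n β r := by
  rw [mm_eq n hβ]; exact div_pos (rho_pos n hβ hr) (ww_pos hβ r)

lemma zz_int {n : ℕ} (hn : 1 ≤ n) {β : ℝ} (hβ : (n:ℝ) < β) : IntegrableOn (zz n β) (Ioi 0) := by
  have : (0:ℝ) ≤ n := by positivity
  exact w_int hn (p := β) (by linarith) (by linarith)

lemma rho_int {n : ℕ} (hn : 1 ≤ n) {β : ℝ} (hβ : (n:ℝ) < β) : IntegrableOn (rho n β) (Ioi 0) := by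
  have : (0:ℝ) ≤ n := by positivity
  have h := w_int hn (β := β) (p := β + 1) (by linarith) (by linarith)
  rw [show -(β+1) = -β-1 by ring] at h
  exact h

lemma mm_int {n : ℕ} (hn : 1 ≤ n) {β : ℝ} (hβ : (n:ℝ) < β) : IntegrableOn (mm n β) (Ioi 0) := by
  have : (0:ℝ) ≤ n := by positivity
  have h := w_int hn (β := β) (p := β + 2) (by linarith) (by linarith)
  rw [show -(β+2) = -β-2 by ring] at h
  exact h

lemma mm_ipos {n : ℕ} (hn : 1 ≤ n) {β : ℝ} (hβ : (n:ℝ) < β) : 0 < ∫ r in Ioi (0:ℝ), mm n β r := by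
  have h0 : (0:ℝ) ≤ n := by positivity
  have hb : 0 < β := by linarith
  rw [setIntegral_pos_iff_support_of_nonneg_ae]
  · have : Function.support (mm n β) ∩ Ioi 0 = Ioi 0 :=
      inter_eq_right.2 fun r hr => (mm_pos n hb hr).ne'
    rw [this]; simp
  · exact (ae_restrict_mem measurableSet_Ioi).mono fun r hr => (mm_pos n hb hr).le
  · exact mm_int hn hβ

lemma mom1 {n : ℕ} (hn : 1 ≤ n) {β : ℝ} (hβ : (n:ℝ) < β) :
    (2*β+2-n) * (∫ r in Ioi (0:ℝ), rho n β r) = 2*(β+1) * ∫ r in Ioi (0:ℝ), mm n β r := by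
  have : (0:ℝ) ≤ n := by positivity
  have h := mom_rel hn (β := β) (p := β + 1) (by linarith) (by linarith)
  rw [show -(β+1)-1 = -β-2 by ring, show -(β+1) = -β-1 by ring, show 2*(β+1)-n = 2*β+2-n by ring] at h
  exact h

lemma mom2 {n : ℕ} (hn : 1 ≤ n) {β : ℝ} (hβ : (n:ℝ) < β) :
    (2*β-n) * (∫ r in Ioi (0:ℝ), zz n β r) = 2*β * ∫ r in Ioi (0:ℝ), rho n β r := by
  have : (0:ℝ) ≤ n := by positivity
  exact mom_rel hn (β := β) (p := β) (by linarith) (by linarith)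

lemma am_int {n : ℕ} (hn : 1 ≤ n) {β : ℝ} (hβ : (n:ℝ) < β) {a : ℝ → ℝ} (ha : Continuous a)
    (hV : IntegrableOn (fun r => a r^2 * mm n β r) (Ioi 0)) : IntegrableOn (fun r => a r * mm n β r) (Ioi 0) := by
  have h0 : (0:ℝ) ≤ n := by positivity
  have hb : 0 < β := by linarith
  have hj : IntegrableOn (fun r => a r^2 * mm n β r + mm n β r) (Ioi 0) := hV.add (mm_int hn hβ)
  refine Integrable.mono' hj (ha.mul (mm_cont n hb)).aestronglyMeasurable ?_
  refine (ae_restrict_mem measurableSet_Ioi).mono fun r hr => ?_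
  have hm := mm_pos n hb hr
  rw [Real.norm_eq_abs, abs_mul, abs_of_pos hm]
  have : |a r| ≤ a r ^2 + 1 := by rw [← sq_abs]; nlinarith [sq_nonneg (|a r| - 1), abs_nonneg (a r)]
  nlinarith

lemma ar_int {n : ℕ} (hn : 1 ≤ n) {β : ℝ} (hβ : (n:ℝ) < β) {a : ℝ → ℝ} (ha : Continuous a)
    (hV : IntegrableOn (fun r => a r^2 * mm n β r) (Ioi 0)) : IntegrableOn (fun r => a r * rho n β r) (Ioi 0) := by
  have h0 : (0:ℝ) ≤ n := by positivity
  have hb : 0 < β := by linarith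
  have hj : IntegrableOn (fun r => a r^2 * mm n β r + zz n β r) (Ioi 0) := hV.add (zz_int hn hβ)
  refine Integrable.mono' hj (ha.mul (rho_cont n hb)).aestronglyMeasurable ?_
  refine (ae_restrict_mem measurableSet_Ioi).mono fun r hr => ?_
  have hm := mm_pos n hb hr
  have hw := ww_pos hb r
  rw [Real.norm_eq_abs, abs_mul, abs_of_pos (rho_pos n hb hr), rho_eq n hb, zz_eq n hb]
  have : |a r| * ww β r ≤ a r ^2 + ww β r^2 := by rw [← sq_abs]; nlinarith [sq_nonneg (|a r| - ww β r), mul_nonneg (abs_nonneg (a r)) hw.le]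
  nlinarith

lemma quad {n : ℕ} (hn : 1 ≤ n) {β : ℝ} (hβ : (n:ℝ) < β) {a : ℝ → ℝ} (ha : Continuous a)
    (hV : IntegrableOn (fun r => a r^2 * mm n β r) (Ioi 0)) (x y : ℝ) :
    IntegrableOn (fun r => (a r - x - y * ww β r)^2 * mm n β r) (Ioi 0) ∧
    ∫ r in Ioi (0:ℝ), (a r - x - y * ww β r)^2 * mm n β r =
      (∫ r in Ioi (0:ℝ), a r^2 * mm n β r) - 2*x*(∫ r in Ioi (0:ℝ), a r * mm n β r)
       - 2*y*(∫ r in Ioi (0:ℝ), a r * rho n β r) + x^2*(∫ r in Ioi (0:ℝ), mm n β r)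
       + 2*x*y*(∫ r in Ioi (0:ℝ), rho n β r) + y^2*(∫ r in Ioi (0:ℝ), zz n β r) := by
  have h0 : (0:ℝ) ≤ n := by positivity
  have hb : 0 < β := by linarith
  have e : (fun r => (a r - x - y * ww β r)^2 * mm n β r) = fun r => a r^2 * mm n β r - 2*x*(a r * mm n β r)
       - 2*y*(a r * rho n β r) + x^2*(mm n β r) + 2*x*y*(rho n β r) + y^2*(zz n β r) := by
    funext r
    rw [rho_eq n hb, zz_eq n hb]; ring
  have i1 : IntegrableOn (fun r => 2*x*(a r * mm n β r)) (Ioi 0) := (am_int hn hβ ha hV).const_mul _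
  have i2 : IntegrableOn (fun r => 2*y*(a r * rho n β r)) (Ioi 0) := (ar_int hn hβ ha hV).const_mul _
  have i3 : IntegrableOn (fun r => x^2*(mm n β r)) (Ioi 0) := (mm_int hn hβ).const_mul _
  have i4 : IntegrableOn (fun r => 2*x*y*(rho n β r)) (Ioi 0) := (rho_int hn hβ).const_mul _
  have i5 : IntegrableOn (fun r => y^2*(zz n β r)) (Ioi 0) := (zz_int hn hβ).const_mul _
  have j1 : IntegrableOn (fun r => a r^2 * mm n β r - 2*x*(a r * mm n β r)) (Ioi 0) := hV.sub i1
  have j2 : IntegrableOn (fun r => a r^2 * mm n β r - 2*x*(a r * mm n β r) - 2*y*(a r * rho n β r)) (Ioi 0) := j1.sub i2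
  have j3 : IntegrableOn (fun r => a r^2 * mm n β r - 2*x*(a r * mm n β r) - 2*y*(a r * rho n β r) + x^2*(mm n β r)) (Ioi 0) := j2.add i3
  have j4 : IntegrableOn (fun r => a r^2 * mm n β r - 2*x*(a r * mm n β r) - 2*y*(a r * rho n β r) + x^2*(mm n β r) + 2*x*y*(rho n β r)) (Ioi 0) := j3.add i4
  rw [e]
  refine ⟨j4.add i5, ?_⟩
  rw [integral_add j4 i5, integral_add j3 i4, integral_add j2 i3, integral_sub j1 i2, integral_sub hV i1]
  simp only [integral_const_mul]

lemma main_ww {n : ℕ} (hn : 1 ≤ n) {β : ℝ} (hβ : (n:ℝ) < β) {ψ : EuclideanSpace ℝ (Fin n) → ℝ} (hψ : ContDiff ℝ 1 ψ)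
    (h1 : Integrable (fun x => ψ x * (ww β ‖x‖)^(-β-1)))
    (h2 : Integrable (fun x => ‖gradient ψ x‖^2 * (ww β ‖x‖)^(-β-1)))
    (h3 : Integrable (fun x => ψ x^2 * (ww β ‖x‖)^(-β-2))) :
    - ((β-n+1)/((β-n) * ∫ x : EuclideanSpace ℝ (Fin n), (ww β ‖x‖)^(-β))) * (∫ x, ψ x * (ww β ‖x‖)^(-β-1))^2
      + (β+1)/β * (∫ x, ψ x^2 * (ww β ‖x‖)^(-β-2)) ≤ ∫ x, ‖gradient ψ x‖^2 * (ww β ‖x‖)^(-β-1) := by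
  have hn0 : (1:ℝ) ≤ n := by exact_mod_cast hn
  have hb : 0 < β := by linarith
  have hs := sS_pos hn
  have hc := hψ.continuous
  have ha := sm_cont hψ
  set Q : ℝ → ℝ := fun r => ∫ θ : sph n, (ψ (r • (θ : EuclideanSpace ℝ (Fin n))))^2 ∂(sig n) with hQ
  have hQc : Continuous Q := by
    have : Q = fun r => sS n * sm (fun x => ψ x^2) r := by
      funext r
      exact sm_int (ψ := fun x => ψ x^2) hn r
    rw [this]
    exact continuous_const.mul (sm_cont (hψ.pow 2))
  have hQa : ∀ r, sS n * sm ψ r^2 ≤ Q r := fun r => by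
    have := sq_sub hn hc r
    have h' : 0 ≤ ∫ θ : sph n, (ψ (r • (θ : EuclideanSpace ℝ (Fin n))) - sm ψ r)^2 ∂(sig n) :=
      integral_nonneg fun θ => sq_nonneg _
    simp only [hQ]; linarith
  have hQi : IntegrableOn (fun r => mm n β r * Q r) (Ioi 0) := by
    refine ⟨((mm_cont n hb).mul hQc).aestronglyMeasurable, ?_⟩
    rw [hasFiniteIntegral_iff_ofReal]
    · have := polar_nn hn hb (-β-2) (fun x => ψ x^2) (hc.pow 2) (fun x => sq_nonneg _)
      simp only [mm]
      simp only [hQ]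
      rw [← this]
      exact (hasFiniteIntegral_iff_ofReal (.of_forall fun x => mul_nonneg (sq_nonneg _) (Real.rpow_nonneg (ww_pos hb _).le _))).1 h3.2
    · refine (ae_restrict_mem measurableSet_Ioi).mono fun r hr => ?_
      exact mul_nonneg (mm_pos n hb hr).le (integral_nonneg fun θ => sq_nonneg _)
  have hV : IntegrableOn (fun r => sm ψ r^2 * mm n β r) (Ioi 0) := by
    refine Integrable.mono' (hQi.const_mul (sS n)⁻¹) ((ha.pow 2).mul (mm_cont n hb)).aestronglyMeasurable ?_
    refine (ae_restrict_mem measurableSet_Ioi).mono fun r hr => ?_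
    have hm := mm_pos n hb hr
    rw [Real.norm_of_nonneg (by positivity)]
    have := hQa r
    calc sm ψ r^2 * mm n β r = (sS n)⁻¹ * (mm n β r * (sS n * sm ψ r^2)) := by field_simp
      _ ≤ _ := by gcongr
  have eN : ∫ x, ψ x^2 * (ww β ‖x‖)^(-β-2) = ∫ r in Ioi (0:ℝ), mm n β r * Q r :=
    polar_w hn (-β-2) (fun x => ψ x^2) h3
  have eJ : ∫ x, ψ x * (ww β ‖x‖)^(-β-1) = sS n * ∫ r in Ioi (0:ℝ), sm ψ r * rho n β r := by
    rw [polar_w hn (-β-1) ψ h1, ← integral_const_mul]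
    refine integral_congr_ae (.of_forall fun r => ?_)
    simp only [sm_int hn, rho]; ring
  have eZ : ∫ x : EuclideanSpace ℝ (Fin n), (ww β ‖x‖)^(-β) = sS n * ∫ r in Ioi (0:ℝ), zz n β r := by
    have hi := wE_int (n := n) hb (p := β) (by linarith)
    have h := polar_w hn (β := β) (-β) (fun _ : EuclideanSpace ℝ (Fin n) => (1:ℝ)) (by simpa using hi)
    simp only [one_mul] at h
    rw [h, ← integral_const_mul]
    refine integral_congr_ae (.of_forall fun r => ?_)
    simp only [integral_const, smul_eq_mul, mul_one, zz]
    rw [← sS]; ring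
  obtain ⟨r0, hr0, hr2⟩ : ∃ r0 : ℝ, 0 < r0 ∧ (2*β+2-n)*r0^2 = 2*n*β := by
    have h : 0 < 2*β+2-n := by linarith
    refine ⟨√(2*n*β/(2*β+2-n)), Real.sqrt_pos.2 (by positivity), ?_⟩
    rw [Real.sq_sqrt (by positivity), mul_div_assoc']; exact mul_div_cancel_left₀ _ h.ne'
  have hI2 := I2 hn hβ (sm ψ) (smd ψ) (sm_deriv hψ) (smd_cont hψ) r0 hr0 hr2
  have hE := energy hn hb hψ
  obtain ⟨q1, q2⟩ := quad hn hβ ha hV (sm ψ r0) 0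
  simp only [zero_mul, sub_zero, mul_zero, add_zero, ne_eq, OfNat.ofNat_ne_zero, not_false_eq_true, zero_pow] at q1 q2
  have eE : ENNReal.ofReal (∫ x, ‖gradient ψ x‖^2 * (ww β ‖x‖)^(-β-1)) =
      ∫⁻ r in Ioi (0:ℝ), ENNReal.ofReal (rho n β r * ∫ θ : sph n, ‖gradient ψ (r • (θ : EuclideanSpace ℝ (Fin n)))‖^2 ∂(sig n)) := by
    rw [ofReal_integral_eq_lintegral_ofReal h2 (.of_forall fun x => mul_nonneg (sq_nonneg _) (Real.rpow_nonneg (ww_pos hb _).le _))]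
    exact polar_nn hn hb (-β-1) (fun x => ‖gradient ψ x‖^2) ((grad_cont ψ hψ).norm.pow 2) (fun x => sq_nonneg _)
  have hl : 0 < (2*β+2-n)/β := div_pos (by linarith) hb
  have s1 : ENNReal.ofReal (sS n * ((2*β+2-n)/β * ∫ r in Ioi (0:ℝ), (sm ψ r - sm ψ r0)^2 * mm n β r)) ≤
      ∫⁻ r in Ioi (0:ℝ), ENNReal.ofReal (sS n * (smd ψ r ^ 2 * rho n β r)) := by
    simp only [ENNReal.ofReal_mul hs.le]
    rw [lintegral_const_mul' _ _ ENNReal.ofReal_ne_top]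
    refine mul_le_mul_right (le_trans (le_of_eq ?_) hI2) _
    rw [← integral_const_mul, ofReal_integral_eq_lintegral_ofReal (q1.const_mul _)]
    refine (ae_restrict_mem measurableSet_Ioi).mono fun r hr => ?_
    have hm := mm_pos n hb hr
    simp only [Pi.zero_apply]
    positivity
  have hsV : IntegrableOn (fun r => mm n β r * (sS n * sm ψ r^2)) (Ioi 0) := by
    refine (hV.const_mul (sS n)).congr (.of_forall fun r => ?_)
    simp only []; ring
  have hd : IntegrableOn (fun r => mm n β r * (Q r - sS n * sm ψ r^2)) (Ioi 0) := by
    refine (hQi.sub hsV).congr (.of_forall fun r => ?_)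
    simp only [Pi.sub_apply]; ring
  have edif : ∫ r in Ioi (0:ℝ), mm n β r * (Q r - sS n * sm ψ r^2) =
      (∫ r in Ioi (0:ℝ), mm n β r * Q r) - sS n * ∫ r in Ioi (0:ℝ), sm ψ r^2 * mm n β r := by
    rw [← integral_const_mul, ← integral_sub hQi (hV.const_mul (sS n))]
    refine integral_congr_ae (.of_forall fun r => ?_)
    simp only []; ring
  have s2 : ENNReal.ofReal ((β+1)/β * ∫ r in Ioi (0:ℝ), mm n β r * (Q r - sS n * sm ψ r^2)) =
      ∫⁻ r in Ioi (0:ℝ), ENNReal.ofReal ((β+1)/β * (mm n β r * (Q r - sS n * sm ψ r^2))) := by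
    rw [← integral_const_mul, ofReal_integral_eq_lintegral_ofReal (hd.const_mul _)]
    refine (ae_restrict_mem measurableSet_Ioi).mono fun r hr => ?_
    have hm := mm_pos n hb hr
    have := sub_nonneg.2 (hQa r)
    simp only [Pi.zero_apply]
    positivity
  have n1 : 0 ≤ sS n * ((2*β+2-n)/β * ∫ r in Ioi (0:ℝ), (sm ψ r - sm ψ r0)^2 * mm n β r) := by
    refine mul_nonneg hs.le (mul_nonneg hl.le (setIntegral_nonneg measurableSet_Ioi fun r hr => ?_))
    have hm := mm_pos n hb hr
    positivity
  have n2 : 0 ≤ (β+1)/β * ∫ r in Ioi (0:ℝ), mm n β r * (Q r - sS n * sm ψ r^2) := by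
    refine mul_nonneg (by positivity) (setIntegral_nonneg measurableSet_Ioi fun r hr => ?_)
    exact mul_nonneg (mm_pos n hb hr).le (sub_nonneg.2 (hQa r))
  have n3 : 0 ≤ ∫ x, ‖gradient ψ x‖^2 * (ww β ‖x‖)^(-β-1) :=
    integral_nonneg fun x => mul_nonneg (sq_nonneg _) (Real.rpow_nonneg (ww_pos hb _).le _)
  have tot : ENNReal.ofReal (sS n * ((2*β+2-n)/β * ∫ r in Ioi (0:ℝ), (sm ψ r - sm ψ r0)^2 * mm n β r)) +
      ENNReal.ofReal ((β+1)/β * ∫ r in Ioi (0:ℝ), mm n β r * (Q r - sS n * sm ψ r^2)) ≤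
      ENNReal.ofReal (∫ x, ‖gradient ψ x‖^2 * (ww β ‖x‖)^(-β-1)) := by
    rw [eE, s2]
    exact (add_le_add_left s1 _).trans hE
  rw [← ENNReal.ofReal_add n1 n2, ENNReal.ofReal_le_ofReal_iff n3, q2, edif] at tot
  have fa := final_alg (c := sm ψ r0) (by linarith : (0:ℝ) < n) hβ (mm_ipos hn hβ) (mom1 hn hβ) (mom2 hn hβ)
    (V := ∫ r in Ioi (0:ℝ), sm ψ r^2 * mm n β r) (F0 := ∫ r in Ioi (0:ℝ), sm ψ r * mm n β r)
    (F1 := ∫ r in Ioi (0:ℝ), sm ψ r * rho n β r) (fun x y => by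
      rw [← (quad hn hβ ha hV x y).2]
      refine setIntegral_nonneg measurableSet_Ioi fun r hr => ?_
      have hm := mm_pos n hb hr
      positivity)
  rw [eN, eJ, eZ]
  refine le_trans ?_ tot
  have fa' := mul_nonneg hs.le fa
  generalize (∫ r in Ioi (0:ℝ), zz n β r) = z at *
  generalize (∫ r in Ioi (0:ℝ), sm ψ r * rho n β r) = F1 at *
  have e : (β-n+1)/((β-n)*(sS n * z)) * (sS n * F1)^2 = sS n * ((β-n+1)/((β-n)*z) * F1^2) := by
    have : β - n ≠ 0 := by linarith
    by_cases hz : z = 0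
    · simp [hz]
    field_simp
  rw [neg_mul, e]
  linarith

end helpers

theorem stmt_17 {n : ℕ} (hn : 1 ≤ n) (β κ : ℝ) (hβ : (n : ℝ) < β)
    (hκ : κ = 1 / ((n : ℝ) - β))
    (ψ : EuclideanSpace ℝ (Fin n) → ℝ) (hsmooth : ContDiff ℝ (⊤ : ℕ∞) ψ)
    (hbdd : BddBelow (Set.range ψ))
    (h1 : Integrable (fun x : EuclideanSpace ℝ (Fin n) =>
      ψ x * (1 + ‖x‖ ^ 2 / (2 * β)) ^ (-β - 1)))
    (h2 : Integrable (fun x : EuclideanSpace ℝ (Fin n) =>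
      ‖gradient ψ x‖ ^ 2 * (1 + ‖x‖ ^ 2 / (2 * β)) ^ (-β - 1)))
    (h3 : Integrable (fun x : EuclideanSpace ℝ (Fin n) =>
      ψ x ^ 2 * (1 + ‖x‖ ^ 2 / (2 * β)) ^ (-β - 2))) :
    ((κ - 1) / ∫ x : EuclideanSpace ℝ (Fin n), (1 + ‖x‖ ^ 2 / (2 * β)) ^ (-β)) *
        (∫ x : EuclideanSpace ℝ (Fin n), ψ x * (1 + ‖x‖ ^ 2 / (2 * β)) ^ (-β - 1)) ^ 2 +
      ((β + 1) / β) *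
        ∫ x : EuclideanSpace ℝ (Fin n), ψ x ^ 2 * (1 + ‖x‖ ^ 2 / (2 * β)) ^ (-β - 2) ≤
    ∫ x : EuclideanSpace ℝ (Fin n), ‖gradient ψ x‖ ^ 2 * (1 + ‖x‖ ^ 2 / (2 * β)) ^ (-β - 1) := by
  have hb : (n:ℝ) < β := hβ
  have h := main_ww hn hβ (hsmooth.of_le (by exact_mod_cast le_top)) h1 h2 h3
  have e : ∀ I : ℝ, (κ - 1) / I = - ((β-n+1)/((β-n) * I)) := fun I => by
    rw [hκ]
    have h1 : β - n ≠ 0 := by linarith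
    have h2 : (n:ℝ) - β ≠ 0 := by linarith
    by_cases hI : I = 0
    · simp [hI]
    have h3 : (n:ℝ) - β = -(β - n) := by ring
    rw [h3]
    field_simp
    ring
  rw [e]
  exact h
end

section
/- (Borell–Brascamp–Lieb) Let n ≥ 1, −1/n < α < 0, κ = α/(1 + nα), and 0 < λ < 1. Let f, g, h : ℝⁿ → [0, ∞] be Lebesgue measurable, with f and g integrable and ∫f > 0, ∫g > 0, and assume that h(λx + (1−λ)y) ≥ [λ·f(x)^α + (1−λ)·g(y)^α]^{1/α} whenever f(x) > 0 and g(y) > 0. Then ∫_{ℝⁿ} h ≥ [ λ·(∫f)^κ + (1−λ)·(∫g)^κ ]^{1/κ} (note κ < 0). -/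
open MeasureTheory
open scoped ENNReal Pointwise

lemma aux_affine (l c : ℝ) (hl : 0 ≤ l) (K : Set ℝ) :
    volume ((fun x => l * x + c) '' K) = ENNReal.ofReal l * volume K := by
  have : (fun x => l * x + c) '' K = (fun x => c + x) '' (l • K) := by
    ext z
    simp only [Set.mem_image, Set.mem_smul_set, smul_eq_mul]
    constructor
    · rintro ⟨x, hx, rfl⟩
      exact ⟨l * x, ⟨x, hx, rfl⟩, by ring⟩
    · rintro ⟨_, ⟨x, hx, rfl⟩, rfl⟩
      exact ⟨x, hx, by ring⟩
  rw [this, Set.image_add_left, measure_preimage_add, Measure.addHaar_smul]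
  simp [abs_of_nonneg hl]

lemma aux_bm_compact (l : ℝ) (hl0 : 0 < l) (hl1 : l < 1) (K L Z : Set ℝ)
    (hK : IsCompact K) (hL : IsCompact L) (hKn : K.Nonempty) (hLn : L.Nonempty)
    (hZ : ∀ x ∈ K, ∀ y ∈ L, l * x + (1 - l) * y ∈ Z) :
    ENNReal.ofReal l * volume K + ENNReal.ofReal (1 - l) * volume L ≤ volume Z := by
  obtain ⟨a, haK, ha⟩ := hK.exists_isGreatest hKn
  obtain ⟨b, hbL, hb⟩ := hL.exists_isLeast hLn
  rw [← aux_affine l ((1 - l) * b) hl0.le K, ← aux_affine (1 - l) (l * a) (by linarith) L]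
  have hmeas : MeasurableSet ((fun x => (1 - l) * x + l * a) '' L) :=
    (hL.image (by fun_prop)).measurableSet
  rw [← measure_union₀ hmeas.nullMeasurableSet]
  · apply measure_mono
    rintro z (⟨x, hx, rfl⟩ | ⟨y, hy, rfl⟩)
    · exact hZ x hx b hbL
    · have := hZ a haK y hy
      rwa [add_comm] at this
  · refine measure_mono_null (t := {l * a + (1 - l) * b}) ?_ (by simp)
    rintro z ⟨⟨x, hx, rfl⟩, ⟨y, hy, hxy⟩⟩
    have h1 : x ≤ a := ha hx
    have h2 : b ≤ y := hb hy
    simp only [Set.mem_singleton_iff] at *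
    have h3 : l * x ≤ l * a := by gcongr
    have h4 : (1 - l) * b ≤ (1 - l) * y := by
      apply mul_le_mul_of_nonneg_left h2; linarith
    linarith

lemma aux_inner (X : Set ℝ) (hX : MeasurableSet X) :
    volume X = ⨆ K : {K : Set ℝ // K ⊆ X ∧ IsCompact K}, volume K.1 := by
  apply le_antisymm
  · rw [hX.measure_eq_iSup_isCompact]
    refine iSup_le fun K => iSup_le fun h1 => iSup_le fun h2 => ?_
    exact le_iSup (fun K : {K : Set ℝ // K ⊆ X ∧ IsCompact K} => volume K.1) ⟨K, h1, h2⟩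
  · exact iSup_le fun K => measure_mono K.2.1

lemma aux_bm (l : ℝ) (hl0 : 0 < l) (hl1 : l < 1) (X Y Z : Set ℝ)
    (hX : MeasurableSet X) (hY : MeasurableSet Y) (hXn : X.Nonempty) (hYn : Y.Nonempty)
    (hZ : ∀ x ∈ X, ∀ y ∈ Y, l * x + (1 - l) * y ∈ Z) :
    ENNReal.ofReal l * volume X + ENNReal.ofReal (1 - l) * volume Y ≤ volume Z := by
  obtain ⟨x0, hx0⟩ := hXn
  obtain ⟨y0, hy0⟩ := hYn
  rw [aux_inner X hX, aux_inner Y hY, ENNReal.mul_iSup, ENNReal.mul_iSup]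
  have : Nonempty {K : Set ℝ // K ⊆ X ∧ IsCompact K} := ⟨∅, by simp⟩
  have : Nonempty {K : Set ℝ // K ⊆ Y ∧ IsCompact K} := ⟨∅, by simp⟩
  refine ENNReal.iSup_add_iSup_le fun K L => ?_
  refine le_trans ?_ (aux_bm_compact l hl0 hl1 (insert x0 K.1) (insert y0 L.1) Z
    (K.2.2.insert x0) (L.2.2.insert y0) (by simp) (by simp) ?_)
  · gcongr <;> exact Set.subset_insert _ _
  · intro x hx y hy
    exact hZ x (Set.insert_subset hx0 K.2.1 hx) y (Set.insert_subset hy0 L.2.1 hy)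

lemma aux_layer (l : ℝ) (hl0 : 0 < l) (hl1 : l < 1) (φ ψ η : ℝ → ℝ)
    (hφ : Measurable φ) (hψ : Measurable ψ) (hη : Measurable η)
    (hφ0 : ∀ x, 0 ≤ φ x) (hψ0 : ∀ x, 0 ≤ ψ x) (hη0 : ∀ x, 0 ≤ η x)
    (hφ1 : ∀ x, φ x ≤ 1) (hψ1 : ∀ x, ψ x ≤ 1)
    (hφs : ∀ t < 1, ∃ x, t < φ x) (hψs : ∀ t < 1, ∃ x, t < ψ x)
    (H : ∀ x y t, 0 < t → t < 1 → t < φ x → t < ψ y → t ≤ η (l * x + (1 - l) * y)) :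
    ENNReal.ofReal l * (∫⁻ x, ENNReal.ofReal (φ x)) +
      ENNReal.ofReal (1 - l) * (∫⁻ x, ENNReal.ofReal (ψ x)) ≤ ∫⁻ x, ENNReal.ofReal (η x) := by
  rw [lintegral_eq_lintegral_meas_lt volume (.of_forall hφ0) hφ.aemeasurable,
    lintegral_eq_lintegral_meas_lt volume (.of_forall hψ0) hψ.aemeasurable,
    lintegral_eq_lintegral_meas_le volume (.of_forall hη0) hη.aemeasurable]
  have hanti : ∀ u : ℝ → ℝ, Measurable (fun t : ℝ => volume {a : ℝ | t < u a}) := by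
    intro u
    apply Antitone.measurable
    intro s t hst
    exact measure_mono fun a (ha : t < u a) => lt_of_le_of_lt hst ha
  rw [← lintegral_const_mul _ (hanti φ), ← lintegral_const_mul _ (hanti ψ),
    ← lintegral_add_left ((hanti φ).const_mul _)]
  refine setLIntegral_mono' measurableSet_Ioi fun t (ht : 0 < t) => ?_
  by_cases h1 : t < 1
  · exact aux_bm l hl0 hl1 _ _ _ (measurableSet_lt measurable_const hφ)
      (measurableSet_lt measurable_const hψ) (hφs t h1) (hψs t h1)
      fun x hx y hy => H x y t ht h1 hx hy
  · have e1 : {a : ℝ | t < φ a} = ∅ := by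
      ext a; simpa using (hφ1 a).trans (not_lt.1 h1)
    have e2 : {a : ℝ | t < ψ a} = ∅ := by
      ext a; simpa using (hψ1 a).trans (not_lt.1 h1)
    simp [e1, e2]

lemma aux_holder_real (l α κ A B F G : ℝ) (hl0 : 0 < l) (hl1 : l < 1) (hα1 : -1 < α)
    (hα2 : α < 0) (hκ : κ = α / (1 + α)) (hA : 0 < A) (hB : 0 < B) (hF : 0 < F) (hG : 0 < G) :
    (l * F ^ κ + (1 - l) * G ^ κ) ^ (1 / κ) ≤
      (l * A ^ α + (1 - l) * B ^ α) ^ (1 / α) * (l * (F / A) + (1 - l) * (G / B)) := by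
  have hl1' : 0 < 1 - l := by linarith
  have h1α : 0 < 1 + α := by linarith
  have hκ0 : κ < 0 := by rw [hκ]; exact div_neg_of_neg_of_pos hα2 h1α
  obtain ⟨m, hm⟩ : ∃ m, m = 1 / (1 + α) := ⟨_, rfl⟩
  have hm1 : 1 ≤ m := by rw [hm, le_div_iff₀ h1α]; linarith
  have hmκ : 1 - m = κ := by rw [hm, hκ]; field_simp; ring
  have hmα : α * m = κ := by rw [hm, hκ]; field_simp
  have key : ∀ A F : ℝ, 0 < A → 0 < F → (F / A) * (A ^ α / (F / A)) ^ m = F ^ κ := by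
    intro A F hA hF
    have hu : 0 < F / A := by positivity
    rw [Real.div_rpow (by positivity) hu.le, ← Real.rpow_mul hA.le, hmα]
    have : F / A * (A ^ κ / (F / A) ^ m) = A ^ κ * ((F / A) ^ (1 - m)) := by
      rw [Real.rpow_sub hu, Real.rpow_one]; ring
    rw [this, hmκ, ← Real.mul_rpow hA.le hu.le]
    congr 1; field_simp
  set S := l * (F / A) + (1 - l) * (G / B) with hS
  set Q := l * A ^ α + (1 - l) * B ^ α with hQ
  have hSp : 0 < S := by positivity
  have hQp : 0 < Q := by positivity
  have J : (l * (F / A) / S * (A ^ α / (F / A)) + (1 - l) * (G / B) / S * (B ^ α / (G / B))) ^ m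
      ≤ l * (F / A) / S * (A ^ α / (F / A)) ^ m +
      (1 - l) * (G / B) / S * (B ^ α / (G / B)) ^ m := by
    have h1 : A ^ α / (F / A) ∈ Set.Ici (0 : ℝ) := Set.mem_Ici.2 (by positivity)
    have h2 : B ^ α / (G / B) ∈ Set.Ici (0 : ℝ) := Set.mem_Ici.2 (by positivity)
    have h3 : 0 ≤ l * (F / A) / S := by positivity
    have h4 : 0 ≤ (1 - l) * (G / B) / S := by positivity
    exact (convexOn_rpow hm1).2 h1 h2 h3 h4 (by rw [← add_div, ← hS, div_self hSp.ne'])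
  have e1 : l * (F / A) / S * (A ^ α / (F / A)) + (1 - l) * (G / B) / S * (B ^ α / (G / B))
      = Q / S := by
    rw [hQ]; field_simp
  have e2 : l * (F / A) / S * (A ^ α / (F / A)) ^ m +
      (1 - l) * (G / B) / S * (B ^ α / (G / B)) ^ m = (l * F ^ κ + (1 - l) * G ^ κ) / S := by
    rw [← key A F hA hF, ← key B G hB hG]; ring
  rw [e1, e2, Real.div_rpow hQp.le hSp.le, le_div_iff₀ hSp] at J
  have e3 : Q ^ m / S ^ m * S = Q ^ m * S ^ κ := by
    rw [← hmκ, Real.rpow_sub hSp, Real.rpow_one]; ring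
  rw [e3] at J
  have J2 := Real.rpow_le_rpow_of_nonpos (by positivity) J (z := 1 / κ)
    (by apply le_of_lt; exact one_div_neg.2 hκ0)
  refine J2.trans (le_of_eq ?_)
  rw [Real.mul_rpow (by positivity) (by positivity), ← Real.rpow_mul hQp.le,
    ← Real.rpow_mul hSp.le, mul_one_div_cancel hκ0.ne, Real.rpow_one]
  congr 2
  rw [← hmα]; field_simp

lemma aux_anti (p : ℝ) (hp : p < 0) {a b : ℝ≥0∞} (h : a ≤ b) : b ^ p ≤ a ^ p := by
  have e : p = -(-p) := by ring
  rw [e, ENNReal.rpow_neg b, ENNReal.rpow_neg a]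
  exact ENNReal.inv_le_inv.2 (ENNReal.rpow_le_rpow h (by linarith))

noncomputable def bblM (l p : ℝ) (a b : ℝ≥0∞) : ℝ≥0∞ :=
  (ENNReal.ofReal l * a ^ p + ENNReal.ofReal (1 - l) * b ^ p) ^ (1 / p)

lemma bblM_mono (l p : ℝ) (hp : p < 0) {a b a' b' : ℝ≥0∞} (ha : a ≤ a') (hb : b ≤ b') :
    bblM l p a b ≤ bblM l p a' b' := by
  unfold bblM
  apply aux_anti _ (one_div_neg.2 hp)
  exact add_le_add (mul_le_mul_right (aux_anti p hp ha) _)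
    (mul_le_mul_right (aux_anti p hp hb) _)

lemma bblM_zero_left (l p : ℝ) (hp : p < 0) (hl0 : 0 < l) (b : ℝ≥0∞) : bblM l p 0 b = 0 := by
  unfold bblM
  rw [ENNReal.zero_rpow_of_neg hp, ENNReal.mul_top (by simpa using hl0), top_add,
    ENNReal.top_rpow_of_neg (one_div_neg.2 hp)]

lemma bblM_zero_right (l p : ℝ) (hp : p < 0) (hl1 : l < 1) (a : ℝ≥0∞) : bblM l p a 0 = 0 := by
  unfold bblM
  rw [ENNReal.zero_rpow_of_neg hp, ENNReal.mul_top (by simpa using hl1), add_top,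
    ENNReal.top_rpow_of_neg (one_div_neg.2 hp)]

lemma bblM_ofReal (l p a b : ℝ) (hl0 : 0 < l) (hl1 : l < 1) (ha : 0 < a) (hb : 0 < b) :
    bblM l p (ENNReal.ofReal a) (ENNReal.ofReal b)
      = ENNReal.ofReal ((l * a ^ p + (1 - l) * b ^ p) ^ (1 / p)) := by
  have hl1' : 0 < 1 - l := by linarith
  unfold bblM
  rw [ENNReal.ofReal_rpow_of_pos ha, ENNReal.ofReal_rpow_of_pos hb, ← ENNReal.ofReal_mul hl0.le,
    ← ENNReal.ofReal_mul hl1'.le, ← ENNReal.ofReal_add (by positivity) (by positivity),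
    ENNReal.ofReal_rpow_of_pos (by positivity)]

lemma aux_holder (l α κ A B : ℝ) (F G : ℝ≥0∞) (hl0 : 0 < l) (hl1 : l < 1) (hα1 : -1 < α)
    (hα2 : α < 0) (hκ : κ = α / (1 + α)) (hA : 0 < A) (hB : 0 < B) :
    bblM l κ F G ≤ bblM l α (ENNReal.ofReal A) (ENNReal.ofReal B) *
      (ENNReal.ofReal l * (F / ENNReal.ofReal A) +
        ENNReal.ofReal (1 - l) * (G / ENNReal.ofReal B)) := by
  have hl1' : 0 < 1 - l := by linarith
  have hκ0 : κ < 0 := by rw [hκ]; exact div_neg_of_neg_of_pos hα2 (by linarith)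
  rcases eq_or_ne F 0 with rfl | hF0
  · rw [bblM_zero_left l κ hκ0 hl0]; exact zero_le
  rcases eq_or_ne G 0 with rfl | hG0
  · rw [bblM_zero_right l κ hκ0 hl1]; exact zero_le
  rw [bblM_ofReal l α A B hl0 hl1 hA hB]
  have hne : ENNReal.ofReal ((l * A ^ α + (1 - l) * B ^ α) ^ (1 / α)) ≠ 0 := by
    rw [ne_eq, ENNReal.ofReal_eq_zero, not_le]; positivity
  rcases eq_or_ne F ⊤ with rfl | hFt
  · rw [ENNReal.top_div_of_ne_top (by simp), ENNReal.mul_top (by simpa using hl0), top_add,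
      ENNReal.mul_top hne]
    exact le_top
  rcases eq_or_ne G ⊤ with rfl | hGt
  · rw [ENNReal.top_div_of_ne_top (by simp), ENNReal.mul_top (by simpa using hl1), add_top,
      ENNReal.mul_top hne]
    exact le_top
  have hF := ENNReal.toReal_pos hF0 hFt
  have hG := ENNReal.toReal_pos hG0 hGt
  rw [← ENNReal.ofReal_toReal hFt, ← ENNReal.ofReal_toReal hGt, bblM_ofReal _ _ _ _ hl0 hl1 hF hG,
    ← ENNReal.ofReal_div_of_pos hA, ← ENNReal.ofReal_div_of_pos hB, ← ENNReal.ofReal_mul hl0.le,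
    ← ENNReal.ofReal_mul hl1'.le, ← ENNReal.ofReal_add (by positivity) (by positivity),
    ← ENNReal.ofReal_mul (by positivity)]
  exact ENNReal.ofReal_le_ofReal
    (aux_holder_real l α κ A B _ _ hl0 hl1 hα1 hα2 hκ hA hB hF hG)

/-- one-dimensional case, real bounded functions -/
lemma bbl_one_real (l α κ : ℝ) (hl0 : 0 < l) (hl1 : l < 1) (hα1 : -1 < α)
    (hα2 : α < 0) (hκ : κ = α / (1 + α)) (f g : ℝ → ℝ) (h : ℝ → ℝ≥0∞)
    (hf : Measurable f) (hg : Measurable g) (hh : Measurable h)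
    (hf0 : ∀ x, 0 ≤ f x) (hg0 : ∀ x, 0 ≤ g x) (N : ℝ) (hfN : ∀ x, f x ≤ N) (hgN : ∀ x, g x ≤ N)
    (H : ∀ x y, bblM l α (ENNReal.ofReal (f x)) (ENNReal.ofReal (g y)) ≤
      h (l * x + (1 - l) * y)) :
    bblM l κ (∫⁻ x, ENNReal.ofReal (f x)) (∫⁻ x, ENNReal.ofReal (g x)) ≤ ∫⁻ x, h x := by
  have hl1' : 0 < 1 - l := by linarith
  have hκ0 : κ < 0 := by rw [hκ]; exact div_neg_of_neg_of_pos hα2 (by linarith)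
  by_cases hfz : ∀ x, f x = 0
  · simp only [hfz, ENNReal.ofReal_zero, lintegral_zero]
    rw [bblM_zero_left l κ hκ0 hl0]; exact zero_le
  by_cases hgz : ∀ x, g x = 0
  · simp only [hgz, ENNReal.ofReal_zero, lintegral_zero]
    rw [bblM_zero_right l κ hκ0 hl1]; exact zero_le
  push Not at hfz hgz
  have sup : ∀ f : ℝ → ℝ, (∀ x, 0 ≤ f x) → (∀ x, f x ≤ N) → (∃ x, f x ≠ 0) →
      ∃ A, 0 < A ∧ (∀ x, f x / A ≤ 1) ∧ ∀ t < 1, ∃ x, t < f x / A := by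
    intro f hf0 hfN ⟨x0, hx0⟩
    have hbdd : BddAbove (Set.range f) := ⟨N, by rintro _ ⟨x, rfl⟩; exact hfN x⟩
    have hA : 0 < ⨆ x, f x := lt_of_lt_of_le (lt_of_le_of_ne (hf0 x0) hx0.symm) (le_ciSup hbdd x0)
    refine ⟨⨆ x, f x, hA, fun x => ?_, fun t ht => ?_⟩
    · rw [div_le_one hA]; exact le_ciSup hbdd x
    · have : t * (⨆ x, f x) < ⨆ x, f x := by nlinarith
      obtain ⟨x, hx⟩ := exists_lt_of_lt_ciSup this
      exact ⟨x, by rwa [lt_div_iff₀ hA]⟩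
  obtain ⟨A, hA, hA1, hA2⟩ := sup f hf0 hfN hfz
  obtain ⟨B, hB, hB1, hB2⟩ := sup g hg0 hgN hgz
  refine (aux_holder l α κ A B _ _ hl0 hl1 hα1 hα2 hκ hA hB).trans ?_
  rw [bblM_ofReal l α A B hl0 hl1 hA hB]
  set C := (l * A ^ α + (1 - l) * B ^ α) ^ (1 / α) with hC
  have hCp : 0 < C := by positivity
  have hfin : ∀ z, min (h z) (ENNReal.ofReal C) ≠ ⊤ := fun z =>
    ne_top_of_le_ne_top ENNReal.ofReal_ne_top (min_le_right _ _)
  have L := aux_layer l hl0 hl1 (fun x => f x / A) (fun x => g x / B)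
    (fun z => (min (h z) (ENNReal.ofReal C)).toReal / C) (hf.div_const _) (hg.div_const _)
    ((hh.min measurable_const).ennreal_toReal.div_const _)
    (fun x => div_nonneg (hf0 x) hA.le) (fun x => div_nonneg (hg0 x) hB.le)
    (fun x => by positivity) hA1 hB1 hA2 hB2 (by
      intro x y t ht ht1 hx hy
      rw [le_div_iff₀ hCp, ← ENNReal.ofReal_le_iff_le_toReal (hfin _)]
      refine le_min ?_ (ENNReal.ofReal_le_ofReal (by nlinarith))
      refine le_trans ?_ (H x y)
      rw [lt_div_iff₀ hA] at hx
      rw [lt_div_iff₀ hB] at hy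
      refine le_trans (le_of_eq ?_) (bblM_mono l α hα2 (ENNReal.ofReal_le_ofReal hx.le)
        (ENNReal.ofReal_le_ofReal hy.le))
      rw [bblM_ofReal l α _ _ hl0 hl1 (by positivity) (by positivity), hC,
        Real.mul_rpow ht.le hA.le, Real.mul_rpow ht.le hB.le]
      congr 1
      have : l * (t ^ α * A ^ α) + (1 - l) * (t ^ α * B ^ α)
        = t ^ α * (l * A ^ α + (1 - l) * B ^ α) := by ring
      rw [this, Real.mul_rpow (by positivity) (by positivity), ← Real.rpow_mul ht.le,
        mul_one_div_cancel hα2.ne, Real.rpow_one])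
  have dv : ∀ (u : ℝ → ℝ) (c : ℝ), 0 < c → Measurable u → ∫⁻ x, ENNReal.ofReal (u x / c)
      = (∫⁻ x, ENNReal.ofReal (u x)) / ENNReal.ofReal c := by
    intro u c hc hu
    simp_rw [ENNReal.ofReal_div_of_pos hc, div_eq_mul_inv]
    rw [lintegral_mul_const _ hu.ennreal_ofReal]
  rw [dv f A hA hf, dv g B hB hg, dv _ C hCp (hh.min measurable_const).ennreal_toReal] at L
  refine (mul_le_mul_right L _).trans ?_
  rw [ENNReal.mul_div_cancel (by simpa using hCp) ENNReal.ofReal_ne_top]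
  refine lintegral_mono fun z => ?_
  rw [ENNReal.ofReal_toReal (hfin z)]
  exact min_le_left _ _

lemma bbl_one (l α κ : ℝ) (hl0 : 0 < l) (hl1 : l < 1) (hα1 : -1 < α)
    (hα2 : α < 0) (hκ : κ = α / (1 + α)) (f g h : ℝ → ℝ≥0∞)
    (hf : Measurable f) (hg : Measurable g) (hh : Measurable h)
    (H : ∀ x y, bblM l α (f x) (g y) ≤ h (l * x + (1 - l) * y)) :
    bblM l κ (∫⁻ x, f x) (∫⁻ x, g x) ≤ ∫⁻ x, h x := by
  have hκ0 : κ < 0 := by rw [hκ]; exact div_neg_of_neg_of_pos hα2 (by linarith)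
  have tr : ∀ f : ℝ → ℝ≥0∞, Measurable f → Filter.Tendsto (fun N : ℕ => ∫⁻ x, min (f x) N)
      Filter.atTop (nhds (∫⁻ x, f x)) := by
    intro f hf
    refine lintegral_tendsto_of_tendsto_of_monotone
      (fun N => (hf.min measurable_const).aemeasurable) (.of_forall fun x => ?_)
      (.of_forall fun x => ?_)
    · intro a b hab
      exact min_le_min le_rfl (by exact_mod_cast hab)
    · have := (tendsto_const_nhds (x := f x)).min ENNReal.tendsto_nat_nhds_top
      simpa using this
  have lim : Filter.Tendsto (fun N : ℕ => bblM l κ (∫⁻ x, min (f x) N) (∫⁻ x, min (g x) N))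
      Filter.atTop (nhds (bblM l κ (∫⁻ x, f x) (∫⁻ x, g x))) := by
    unfold bblM
    refine ENNReal.continuous_rpow_const.continuousAt.tendsto.comp (Filter.Tendsto.add ?_ ?_)
    · exact ENNReal.Tendsto.const_mul
        (ENNReal.continuous_rpow_const.continuousAt.tendsto.comp (tr f hf)) (.inr (by simp))
    · exact ENNReal.Tendsto.const_mul
        (ENNReal.continuous_rpow_const.continuousAt.tendsto.comp (tr g hg)) (.inr (by simp))
  refine le_of_tendsto' lim fun N => ?_
  have fin : ∀ a : ℝ≥0∞, min a (N : ℝ≥0∞) ≠ ⊤ := fun a =>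
    ne_top_of_le_ne_top (ENNReal.natCast_ne_top N) (min_le_right _ _)
  have bd : ∀ a : ℝ≥0∞, (min a (N : ℝ≥0∞)).toReal ≤ N := fun a => by
    have := ENNReal.toReal_mono (ENNReal.natCast_ne_top N) (min_le_right a (N : ℝ≥0∞))
    simpa using this
  have R := bbl_one_real l α κ hl0 hl1 hα1 hα2 hκ (fun x => (min (f x) N).toReal)
    (fun x => (min (g x) N).toReal) h (hf.min measurable_const).ennreal_toReal
    (hg.min measurable_const).ennreal_toReal hh (fun x => ENNReal.toReal_nonneg)
    (fun x => ENNReal.toReal_nonneg) N (fun x => bd _) (fun x => bd _) (by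
      intro x y
      rw [ENNReal.ofReal_toReal (fin _), ENNReal.ofReal_toReal (fin _)]
      exact (bblM_mono l α hα2 (min_le_left _ _) (min_le_left _ _)).trans (H x y))
  simpa only [ENNReal.ofReal_toReal (fin _)] using R

lemma bbl_cons {n : ℕ} (f : (Fin (n + 1) → ℝ) → ℝ≥0∞) (hf : Measurable f) :
    Measurable (fun p : ℝ × (Fin n → ℝ) => f (Fin.cons p.1 p.2)) ∧
    ∫⁻ x, f x = ∫⁻ s : ℝ, ∫⁻ x : Fin n → ℝ, f (Fin.cons s x) := by
  have e : ∀ p : ℝ × (Fin n → ℝ), (MeasurableEquiv.piFinSuccAbove (fun _ : Fin (n + 1) => ℝ) 0).symm p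
      = Fin.cons p.1 p.2 := by
    intro p
    simp [MeasurableEquiv.piFinSuccAbove, Fin.insertNthEquiv]
  have hm : Measurable (fun p : ℝ × (Fin n → ℝ) => f (Fin.cons p.1 p.2)) := by
    simp_rw [← e]
    exact hf.comp (MeasurableEquiv.measurable _)
  refine ⟨hm, ?_⟩
  rw [← ((volume_preserving_piFinSuccAbove (fun _ : Fin (n + 1) => ℝ) 0).symm _).lintegral_comp hf]
  simp_rw [e]
  exact lintegral_prod _ hm.aemeasurable

lemma bbl_pi (l : ℝ) (hl0 : 0 < l) (hl1 : l < 1) (α : ℝ) (hα2 : α < 0) (n : ℕ) :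
    ∀ (κ : ℝ) (_ : 0 < 1 + n * α) (_ : κ = α / (1 + n * α)) (f g h : (Fin n → ℝ) → ℝ≥0∞)
    (_ : Measurable f) (_ : Measurable g) (_ : Measurable h)
    (_ : ∀ x y, bblM l α (f x) (g y) ≤ h (l • x + (1 - l) • y)),
    bblM l κ (∫⁻ x, f x) (∫⁻ x, g x) ≤ ∫⁻ x, h x := by
  induction n with
  | zero =>
    intro κ _ hκ f g h hf hg hh H
    have hκ' : κ = α := by simpa using hκ
    subst hκ'
    have e : ∀ f : (Fin 0 → ℝ) → ℝ≥0∞, ∫⁻ x, f x = f default := by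
      intro f
      rw [lintegral_unique, volume_pi, Measure.pi_of_empty (fun _ : Fin 0 => (volume : Measure ℝ)) default,
        Measure.dirac_apply_of_mem (Set.mem_univ _), mul_one]
      exact congrArg f (Subsingleton.elim _ _)
    rw [e f, e g, e h]
    refine (H default default).trans (le_of_eq ?_)
    congr 1
    exact Subsingleton.elim _ _
  | succ n ih =>
    intro κ hpos hκ f g h hf hg hh H
    push_cast at hpos hκ
    have hpos' : 0 < 1 + n * α := by linarith
    obtain ⟨hf', ef⟩ := bbl_cons f hf
    obtain ⟨hg', eg⟩ := bbl_cons g hg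
    obtain ⟨hh', eh⟩ := bbl_cons h hh
    rw [ef, eg, eh]
    refine bbl_one l (α / (1 + n * α)) κ hl0 hl1 ?_ (div_neg_of_neg_of_pos hα2 hpos') ?_ _ _ _
      hf'.lintegral_prod_right' hg'.lintegral_prod_right' hh'.lintegral_prod_right' ?_
    · rw [lt_div_iff₀ hpos']; linarith
    · have : 1 + α / (1 + n * α) = (1 + (n + 1) * α) / (1 + n * α) := by
        rw [eq_div_iff hpos'.ne', add_mul, div_mul_cancel₀ _ hpos'.ne']; ring
      rw [hκ, this, div_div_div_cancel_right₀ hpos'.ne']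
    · intro s t
      refine ih _ hpos' rfl _ _ _ (hf'.comp measurable_prodMk_left)
        (hg'.comp measurable_prodMk_left) (hh'.comp measurable_prodMk_left) ?_
      intro x y
      refine (H _ _).trans (le_of_eq ?_)
      congr 1
      ext i
      refine Fin.cases ?_ (fun j => ?_) i <;> simp

theorem stmt_19 {n : ℕ} (hn : 1 ≤ n) (α κ l : ℝ)
    (hα1 : -1 / (n : ℝ) < α) (hα2 : α < 0) (hκ : κ = α / (1 + n * α))
    (hl0 : 0 < l) (hl1 : l < 1)
    (f g h : EuclideanSpace ℝ (Fin n) → ℝ≥0∞)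
    (hf : Measurable f) (hg : Measurable g) (hh : Measurable h)
    (hfi : ∫⁻ x, f x ≠ ⊤) (hgi : ∫⁻ x, g x ≠ ⊤)
    (hf0 : 0 < ∫⁻ x, f x) (hg0 : 0 < ∫⁻ x, g x)
    (hyp : ∀ x y : EuclideanSpace ℝ (Fin n), 0 < f x → 0 < g y →
      (ENNReal.ofReal l * f x ^ α + ENNReal.ofReal (1 - l) * g y ^ α) ^ (1 / α) ≤
        h (l • x + (1 - l) • y)) :
    (ENNReal.ofReal l * (∫⁻ x, f x) ^ κ + ENNReal.ofReal (1 - l) * (∫⁻ x, g x) ^ κ) ^ (1 / κ) ≤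
      ∫⁻ x, h x := by
  have hn' : (0 : ℝ) < n := by exact_mod_cast hn
  have hpos : 0 < 1 + n * α := by
    rw [div_lt_iff₀ hn'] at hα1; linarith
  have mp := PiLp.volume_preserving_toLp (Fin n)
  rw [← mp.lintegral_comp hf, ← mp.lintegral_comp hg, ← mp.lintegral_comp hh]
  refine bbl_pi l hl0 hl1 α hα2 n κ hpos hκ _ _ _ (hf.comp mp.measurable) (hg.comp mp.measurable)
    (hh.comp mp.measurable) ?_
  intro x y
  rcases eq_or_ne (f (WithLp.toLp 2 x)) 0 with h0 | h0
  · rw [h0, bblM_zero_left l α hα2 hl0]; exact zero_le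
  rcases eq_or_ne (g (WithLp.toLp 2 y)) 0 with h1 | h1
  · rw [h1, bblM_zero_right l α hα2 hl1]; exact zero_le
  exact hyp _ _ (pos_iff_ne_zero.2 h0) (pos_iff_ne_zero.2 h1)
end
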